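/- Assume the stated hypotheses on Ω and u. Then for every ε > 0 there exists C_ε > 0 such that for every (x,t) ∈ Ω_{δ₀} × [T/2, T] and all unit vectors τ, τ̂ orthogonal to ν(x), one has |∇u(x,t)·τ|^p + |τ·(D²u(x,t))ν(x)| + |τ·(D²u(x,t))τ̂| ≤ ε δ(x)^{−βp} + C_ε. -/

import Mathlib

open Set Metric Filter RealInnerProductSpace

noncomputable section

/-- A set `Ω ⊆ ℝⁿ` has boundary of class `C²`: near each boundary point, `Ω` is the strict
sublevel set of a `C²` function with nonvanishing gradient (equivalently, after a rigid motion,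
the boundary is locally the graph of a `C²` function with `Ω` strictly on one side). -/
def IsC2Boundary {n : ℕ} (Ω : Set (EuclideanSpace ℝ (Fin n))) : Prop :=
  ∀ x ∈ frontier Ω, ∃ f : EuclideanSpace ℝ (Fin n) → ℝ, ∃ U ∈ nhds x,
    ContDiffOn ℝ 2 f U ∧ (∀ y ∈ U, fderiv ℝ f y ≠ 0) ∧
    U ∩ Ω = U ∩ {y | f y < 0} ∧ U ∩ frontier Ω = U ∩ {y | f y = 0}

/-!
Near the boundary all terms of the equation balance on the scale `δ`, where `|u| ≲ δ^(1-β)` and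
`|∇u| ≲ δ^(-β)`. Rescaled by `l ∼ δ` around a boundary point, the boundary becomes flat and the time
derivative negligible, since `|u_t| ≤ M` and its coefficient `l^(1+β)` tends to `0`. A comparison
of the rescaled solution with its tangential translates, using a barrier in a large flat box, shows
that the tangential increments of `u` over the distance `δ` are `o(δ^(1-β))`. Since the Hessian is
`O(δ^(-β-1))`, Taylor's formula turns this into `|∇u·τ| = o(δ^(-β))`. A tangential derivative solves
the linearized equation, so Brandt's interior gradient estimate on cylinders of size `δ`, applied
to difference quotients, bounds `(D²u)τ` by `|∇u·τ| / δ = o(δ^(-β-1))`, and `βp = β + 1`.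
-/

open Topology

section SecondOrderCalculus

lemma eventually_comp_line {V : Type*} [NormedAddCommGroup V] [NormedSpace ℝ V] {P : V → Prop}
    {x : V} (h : ∀ᶠ y in 𝓝 x, P y) (d : V) :
    ∀ᶠ s in 𝓝 (0 : ℝ), P (x + s • d) := by
  have hline : Continuous fun s : ℝ => x + s • d := by fun_prop
  exact (hline.tendsto' 0 x (by simp)).eventually h

variable {E F : Type*} [NormedAddCommGroup E] [InnerProductSpace ℝ E] [CompleteSpace E]
  [NormedAddCommGroup F] [InnerProductSpace ℝ F] [CompleteSpace F]

/-- Pointwise second differentiability of a real function on a Hilbert space: `g` is the gradient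
of `f` near `x`, and the Hessian of `f` at `x` is the operator `A`, the derivative of `g` there.
The Laplacian of `f` at `x` is then the trace of `A`. -/
structure HasHessianAt (f : E → ℝ) (g : E → E) (A : E →L[ℝ] E) (x : E) : Prop where
  gradient : ∀ᶠ y in 𝓝 x, HasGradientAt f (g y) y
  hasFDerivAt : HasFDerivAt g A x

/-- The derivatives entering a second order parabolic equation: at `(x, t)` the function `u` has
spatial Hessian `A` (with `G · t` as spatial gradient near `x`) and time derivative `c`. -/
structure HasParabolicDerivAt (u : E → ℝ → ℝ) (G : E → ℝ → E) (A : E →L[ℝ] E) (c : ℝ)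
    (x : E) (t : ℝ) : Prop where
  hessian : HasHessianAt (u · t) (G · t) A x
  time : HasDerivAt (u x) c t

lemma hasDerivAt_comp_line {f : E → ℝ} {g x d : E} {s : ℝ} (h : HasGradientAt f g (x + s • d)) :
    HasDerivAt (fun r : ℝ => f (x + r • d)) ⟪g, d⟫ s := by
  have hline : HasDerivAt (fun r : ℝ => x + r • d) d s := by
    simpa using ((hasDerivAt_id s).smul_const d).const_add x
  exact (h.hasFDerivAt.comp_hasDerivAt s hline).congr_deriv (by simp)

lemma abs_sub_le_of_inner_gradient_le {f : E → ℝ} {g : E → E} {x d : E} {C : ℝ}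
    (hg : ∀ s ∈ Icc (0 : ℝ) 1, HasGradientAt f (g (x + s • d)) (x + s • d))
    (hC : ∀ s ∈ Icc (0 : ℝ) 1, |⟪g (x + s • d), d⟫| ≤ C) : |f (x + d) - f x| ≤ C := by
  simpa using norm_image_sub_le_of_norm_deriv_le_segment_01'
    (fun s hs => (hasDerivAt_comp_line (hg s hs)).hasDerivWithinAt)
    (fun s hs => hC s (Ico_subset_Icc_self hs))

lemma norm_sub_le_of_norm_fderiv_apply_le {V W : Type*} [NormedAddCommGroup V] [NormedSpace ℝ V]
    [NormedAddCommGroup W] [NormedSpace ℝ W] {g : V → W} {A : V → V →L[ℝ] W} {x d : V} {C : ℝ}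
    (hg : ∀ a ∈ Icc (0 : ℝ) 1, HasFDerivAt g (A (x + a • d)) (x + a • d))
    (hC : ∀ a ∈ Icc (0 : ℝ) 1, ‖A (x + a • d) d‖ ≤ C) : ‖g (x + d) - g x‖ ≤ C := by
  have hline (a : ℝ) : HasDerivAt (fun b : ℝ => x + b • d) d a := by
    simpa using ((hasDerivAt_id a).smul_const d).const_add x
  simpa using norm_image_sub_le_of_norm_deriv_le_segment_01'
    (fun a ha => ((hg a ha).comp_hasDerivAt a (hline a)).hasDerivWithinAt)
    (fun a ha => hC a (Ico_subset_Icc_self ha))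

lemma lipschitzOnWith_norm_rpow (V : Type*) [SeminormedAddCommGroup V] {p : ℝ} (hp : 1 ≤ p)
    (L : ℝ) :
    LipschitzOnWith (p * L ^ (p - 1)).toNNReal (fun v : V => ‖v‖ ^ p) (closedBall 0 L) := by
  have hrpow : LipschitzOnWith (p * L ^ (p - 1)).toNNReal (fun s : ℝ => s ^ p) (Icc 0 L) := by
    refine (convex_Icc 0 L).lipschitzOnWith_of_nnnorm_hasDerivWithin_le
      (fun s _ => (Real.hasDerivAt_rpow_const (Or.inr hp)).hasDerivWithinAt) fun s hs => ?_
    rw [← NNReal.coe_le_coe, coe_nnnorm, Real.norm_of_nonneg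
      (mul_nonneg (by linarith) (Real.rpow_nonneg hs.1 _))]
    refine le_trans ?_ (Real.le_coe_toNNReal _)
    gcongr
    exacts [hs.1, hs.2]
  have hmaps : MapsTo (fun v : V => ‖v‖) (closedBall 0 L) (Icc 0 L) :=
    fun v hv => ⟨norm_nonneg v, mem_closedBall_zero_iff.1 hv⟩
  simpa only [mul_one, Function.comp_def] using hrpow.comp
    (lipschitzWith_one_norm.lipschitzOnWith (s := closedBall (0 : V) L)) hmaps

namespace HasHessianAt

variable {f f₁ f₂ : E → ℝ} {g g₁ g₂ : E → E} {A A₁ A₂ : E →L[ℝ] E} {x : E}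

lemma add (h₁ : HasHessianAt f₁ g₁ A₁ x) (h₂ : HasHessianAt f₂ g₂ A₂ x) :
    HasHessianAt (fun y => f₁ y + f₂ y) (fun y => g₁ y + g₂ y) (A₁ + A₂) x where
  gradient := by filter_upwards [h₁.gradient, h₂.gradient] with y hy₁ hy₂ using
    (hy₁.hasFDerivAt.add hy₂.hasFDerivAt).congr_fderiv (map_add _ _ _).symm
  hasFDerivAt := h₁.hasFDerivAt.add h₂.hasFDerivAt

lemma sub (h₁ : HasHessianAt f₁ g₁ A₁ x) (h₂ : HasHessianAt f₂ g₂ A₂ x) :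
    HasHessianAt (fun y => f₁ y - f₂ y) (fun y => g₁ y - g₂ y) (A₁ - A₂) x where
  gradient := by filter_upwards [h₁.gradient, h₂.gradient] with y hy₁ hy₂ using
    (hy₁.hasFDerivAt.sub hy₂.hasFDerivAt).congr_fderiv (map_sub _ _ _).symm
  hasFDerivAt := h₁.hasFDerivAt.sub h₂.hasFDerivAt

lemma const_mul (h : HasHessianAt f g A x) (c : ℝ) :
    HasHessianAt (fun y => c * f y) (fun y => c • g y) (c • A) x where
  gradient := by
    filter_upwards [h.gradient] with y hy using
      (hy.hasFDerivAt.const_mul c).congr_fderiv (by simp)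
  hasFDerivAt := h.hasFDerivAt.const_smul c

lemma comp_affine {b : E} {L : F →L[ℝ] E} {y : F}
    (h : HasHessianAt f g A (b + L y)) :
    HasHessianAt (fun z => f (b + L z)) (fun z => L.adjoint (g (b + L z)))
      (L.adjoint ∘L A ∘L L) y where
  gradient := by
    have hcont : Continuous fun z => b + L z := by fun_prop
    filter_upwards [hcont.continuousAt.eventually h.gradient] with z hz
    refine (hz.hasFDerivAt.comp z (L.hasFDerivAt.const_add b)).congr_fderiv ?_
    ext v
    simp [L.adjoint_inner_left]
  hasFDerivAt :=
    L.adjoint.hasFDerivAt.comp y (h.hasFDerivAt.comp y (L.hasFDerivAt.const_add b))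

lemma comp_const_add {b : E} (h : HasHessianAt f g A (x + b)) :
    HasHessianAt (fun y => f (y + b)) (fun y => g (y + b)) A x := by
  have h' := (show HasHessianAt f g A (b + ContinuousLinearMap.id ℝ E x) by
    simpa [add_comm] using h).comp_affine
  simpa [add_comm, ContinuousLinearMap.adjoint_id] using h'

lemma rescale {b y : E} {l : ℝ} (h : HasHessianAt f g A (b + l • y)) (c : ℝ) :
    HasHessianAt (fun z => c * f (b + l • z)) (fun z => (c * l) • g (b + l • z))
      ((c * l ^ 2) • A) y := by
  have hcomp := (HasHessianAt.comp_affine (L := l • ContinuousLinearMap.id ℝ E) h).const_mul c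
  convert hcomp using 1
  · ext z
    simp
  · ext z
    simp [smul_smul, ContinuousLinearMap.adjoint_id]
  · ext z
    simp [smul_smul, sq, ContinuousLinearMap.adjoint_id]

lemma inner_apply_comm (h : HasHessianAt f g A x) (v w : E) : ⟪A v, w⟫ = ⟪A w, v⟫ := by
  have h' : HasFDerivAt (fun y => InnerProductSpace.toDual ℝ E (g y))
      ((InnerProductSpace.toDual ℝ E).toContinuousLinearEquiv.toContinuousLinearMap ∘L A) x :=
    (InnerProductSpace.toDual ℝ E).toContinuousLinearEquiv.toContinuousLinearMap.hasFDerivAt.comp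
      x h.hasFDerivAt
  simpa using second_derivative_symmetric_of_eventually
    (h.gradient.mono fun y hy => hy.hasFDerivAt) h' v w

lemma gradient_eq_zero_of_isLocalMax (h : HasHessianAt f g A x) (hmax : IsLocalMax f x) :
    g x = 0 := by
  have hdual := hmax.hasFDerivAt_eq_zero h.gradient.self_of_nhds.hasFDerivAt
  exact (InnerProductSpace.toDual ℝ E).map_eq_zero_iff.1 hdual

lemma inner_apply_self_nonpos_of_isLocalMax (h : HasHessianAt f g A x) (hmax : IsLocalMax f x)
    (d : E) : ⟪A d, d⟫ ≤ 0 := by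
  set φ : ℝ → ℝ := fun s => f (x + s • d)
  have hφ : ∀ᶠ s in 𝓝 (0 : ℝ), HasDerivAt φ ⟪g (x + s • d), d⟫ s :=
    (eventually_comp_line h.gradient d).mono fun s hs => hasDerivAt_comp_line hs
  have hφ' : HasDerivAt (fun s : ℝ => ⟪g (x + s • d), d⟫) ⟪A d, d⟫ 0 := by
    have hline : HasDerivAt (fun s : ℝ => x + s • d) d 0 := by
      simpa using ((hasDerivAt_id (0 : ℝ)).smul_const d).const_add x
    have hg := (show HasFDerivAt g A (x + (0 : ℝ) • d) by
      simpa using h.hasFDerivAt).comp_hasDerivAt 0 hline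
    simpa using hg.inner ℝ (hasDerivAt_const 0 d)
  have hmaxφ : IsLocalMax φ 0 := by
    simpa [IsLocalMax, IsMaxFilter, φ] using eventually_comp_line hmax d
  have hderiv : deriv φ =ᶠ[𝓝 0] fun s => ⟪g (x + s • d), d⟫ := hφ.mono fun s hs => hs.deriv
  by_contra! hpos
  -- Then `0` is also a local minimum of `φ`, which is therefore locally constant.
  have hminφ : IsLocalMin φ 0 := isLocalMin_of_deriv_deriv_pos
    (by rwa [hderiv.deriv_eq, hφ'.deriv]) hmaxφ.deriv_eq_zero hφ.self_of_nhds.continuousAt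
  have hconst : φ =ᶠ[𝓝 0] fun _ => φ 0 := by
    filter_upwards [hmaxφ, hminφ] with s hs hs' using le_antisymm hs hs'
  have hzero : deriv (deriv φ) 0 = 0 := by
    rw [hconst.deriv.deriv_eq]
    simp
  rw [hderiv.deriv_eq, hφ'.deriv] at hzero
  exact hpos.ne' hzero

end HasHessianAt

namespace HasParabolicDerivAt

variable {u u₁ u₂ : E → ℝ → ℝ} {G G₁ G₂ : E → ℝ → E} {A A₁ A₂ : E →L[ℝ] E} {c c₁ c₂ : ℝ}
  {x : E} {t : ℝ}

lemma sub (h₁ : HasParabolicDerivAt u₁ G₁ A₁ c₁ x t) (h₂ : HasParabolicDerivAt u₂ G₂ A₂ c₂ x t) :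
    HasParabolicDerivAt (fun y s => u₁ y s - u₂ y s) (fun y s => G₁ y s - G₂ y s)
      (A₁ - A₂) (c₁ - c₂) x t :=
  ⟨h₁.hessian.sub h₂.hessian, h₁.time.sub h₂.time⟩

lemma const_mul (h : HasParabolicDerivAt u G A c x t) (k : ℝ) :
    HasParabolicDerivAt (fun y s => k * u y s) (fun y s => k • G y s) (k • A) (k * c) x t :=
  ⟨h.hessian.const_mul k, h.time.const_mul k⟩

lemma comp_affine {b : E} {L : F →L[ℝ] E} {y : F} (h : HasParabolicDerivAt u G A c (b + L y) t) :
    HasParabolicDerivAt (fun z => u (b + L z)) (fun z s => L.adjoint (G (b + L z) s))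
      (L.adjoint ∘L A ∘L L) c y t :=
  ⟨h.hessian.comp_affine, h.time⟩

lemma comp_const_add {b : E} (h : HasParabolicDerivAt u G A c (x + b) t) :
    HasParabolicDerivAt (fun y => u (y + b)) (fun y => G (y + b)) A c x t :=
  ⟨h.hessian.comp_const_add, h.time⟩

end HasParabolicDerivAt

section Examples

variable {x : E}

lemma hasHessianAt_const (c : ℝ) : HasHessianAt (fun _ => c) (fun _ => 0) 0 x :=
  ⟨Eventually.of_forall fun y => hasGradientAt_const y c, hasFDerivAt_const 0 x⟩

lemma hasHessianAt_norm_sub_sq (a : E) :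
    HasHessianAt (fun y => ‖y - a‖ ^ 2) (fun y => (2 : ℝ) • (y - a))
      ((2 : ℝ) • ContinuousLinearMap.id ℝ E) x where
  gradient := Eventually.of_forall fun y => by
    refine ((hasFDerivAt_id y).sub_const a).norm_sq.congr_fderiv ?_
    ext v
    simp
  hasFDerivAt := ((hasFDerivAt_id x).sub_const a).const_smul (2 : ℝ)

lemma hasHessianAt_comp_inner {φ φ' : ℝ → ℝ} {c : ℝ} (a ξ : E)
    (hφ : ∀ s, HasDerivAt φ (φ' s) s) (hφ' : HasDerivAt φ' c ⟪ξ, x - a⟫) :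
    HasHessianAt (fun y => φ ⟪ξ, y - a⟫) (fun y => φ' ⟪ξ, y - a⟫ • ξ)
      (c • InnerProductSpace.rankOne ℝ ξ ξ) x := by
  have hinner (y : E) : HasFDerivAt (fun z => ⟪ξ, z - a⟫) (innerSL ℝ ξ) y :=
    (innerSL ℝ ξ).hasFDerivAt.comp y ((hasFDerivAt_id y).sub_const a)
  refine ⟨Eventually.of_forall fun y => ?_, ?_⟩
  · refine ((hφ _).comp_hasFDerivAt y (hinner y)).congr_fderiv ?_
    ext v
    simp
  · refine ((hφ'.comp_hasFDerivAt x (hinner x)).smul_const ξ).congr_fderiv ?_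
    ext v
    simp [mul_smul]

end Examples

lemma inner_gradient_le_of_norm_hessian_apply_le {f : E → ℝ} {g : E → E} {A : E → E →L[ℝ] E}
    {x d : E} {C : ℝ} (h : ∀ a ∈ Icc (0 : ℝ) 1, HasHessianAt f g (A (x + a • d)) (x + a • d))
    (hC : ∀ a ∈ Icc (0 : ℝ) 1, ‖A (x + a • d) d‖ ≤ C) :
    ⟪g x, d⟫ ≤ f (x + d) - f x + C * ‖d‖ := by
  have hgrad (a : ℝ) (ha : a ∈ Icc (0 : ℝ) 1) : ‖g (x + a • d) - g x‖ ≤ C := by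
    refine norm_sub_le_of_norm_fderiv_apply_le (A := A) (d := a • d) (fun r hr => ?_) fun r hr => ?_
    · rw [smul_smul]
      exact (h _ (unitInterval.mul_mem hr ha)).hasFDerivAt
    · rw [smul_smul, map_smul, norm_smul, Real.norm_of_nonneg ha.1]
      exact (mul_le_of_le_one_left (norm_nonneg _) ha.2).trans (hC _ (unitInterval.mul_mem hr ha))
  have htaylor := abs_sub_le_of_inner_gradient_le (f := fun y => f y - ⟪g x, y⟫)
    (g := fun y => g y - g x) (x := x) (d := d) (C := C * ‖d‖)
    (fun a ha => ((h a ha).gradient.self_of_nhds.hasFDerivAt.sub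
      (innerSL ℝ (g x)).hasFDerivAt).congr_fderiv (map_sub _ _ _).symm)
    (fun a ha => (abs_real_inner_le_norm _ _).trans
      (mul_le_mul_of_nonneg_right (hgrad a ha) (norm_nonneg d)))
  rw [inner_add_right] at htaylor
  linarith [(abs_le.1 htaylor).1]

end SecondOrderCalculus

section RealPowers

lemma rpow_le_two_mul_rpow {γ d d' : ℝ} (hγ0 : 0 ≤ γ) (hγ1 : γ ≤ 1) (hd : 0 ≤ d) (hd' : 0 ≤ d')
    (h : d' ≤ 2 * d) : d' ^ γ ≤ 2 * d ^ γ :=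
  calc d' ^ γ ≤ (2 * d) ^ γ := Real.rpow_le_rpow hd' h hγ0
    _ = 2 ^ γ * d ^ γ := Real.mul_rpow zero_le_two hd
    _ ≤ 2 * d ^ γ := by
      gcongr
      exact (Real.rpow_le_rpow_of_exponent_le one_le_two hγ1).trans_eq (Real.rpow_one 2)

lemma rpow_neg_le_two_mul_rpow_neg {γ d d' : ℝ} (hγ0 : 0 ≤ γ) (hγ1 : γ ≤ 1) (hd : 0 < d)
    (h : d / 2 ≤ d') : d' ^ (-γ) ≤ 2 * d ^ (-γ) := by
  have hd' : 0 < d' := (half_pos hd).trans_le h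
  rw [Real.rpow_neg_eq_inv_rpow, Real.rpow_neg_eq_inv_rpow]
  refine rpow_le_two_mul_rpow hγ0 hγ1 (by positivity) (by positivity) ?_
  rw [← div_eq_mul_inv, inv_le_comm₀ hd' (by positivity), inv_div]
  exact h

lemma exists_rpow_le {c κ : ℝ} (hc : 0 < c) (hκ : 0 < κ) : ∃ a ∈ Ioc (0 : ℝ) 1, a ^ c ≤ κ := by
  have hsmall : ∀ᶠ a : ℝ in 𝓝[>] 0, a ^ c ≤ κ :=
    (((Real.continuous_rpow_const hc.le).tendsto' 0 0 (Real.zero_rpow hc.ne')).mono_left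
      nhdsWithin_le_nhds).eventually_le_const hκ
  have hunit : ∀ᶠ a : ℝ in 𝓝[>] 0, a ∈ Ioc 0 1 := Ioc_mem_nhdsGT one_pos
  exact (hunit.and hsmall).exists

lemma exists_div_sq_add_div_lt (c₁ c₂ : ℝ) {q : ℝ} (hq : 0 < q) :
    ∃ R > 0, c₁ / R ^ 2 + c₂ / R < q := by
  have hlim : Tendsto (fun R : ℝ => c₁ / R ^ 2 + c₂ / R) atTop (𝓝 (0 + 0)) :=
    (tendsto_const_nhds.div_atTop (tendsto_pow_atTop two_ne_zero)).add
      (tendsto_const_nhds.div_atTop tendsto_id)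
  rw [add_zero] at hlim
  exact ((eventually_gt_atTop 0).and (hlim.eventually_lt_const hq)).exists

lemma abs_le_of_abs_deriv_le_rpow {f f' : ℝ → ℝ} {K β d : ℝ} (hβ : β < 1) (hd : 0 ≤ d)
    (hcont : ContinuousOn f (Icc 0 d)) (hzero : f 0 = 0)
    (hderiv : ∀ s ∈ Ioo 0 d, HasDerivAt f (f' s) s)
    (hbound : ∀ s ∈ Ioo 0 d, |f' s| ≤ K * s ^ (-β)) :
    |f d| ≤ K / (1 - β) * d ^ (1 - β) := by
  have hβ' : 1 - β ≠ 0 := by linarith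
  set B : ℝ → ℝ := fun s => K / (1 - β) * s ^ (1 - β)
  have hBcont : Continuous B := continuous_const.mul (Real.continuous_rpow_const (by linarith))
  have hBderiv (s : ℝ) (hs : s ∈ Ioo 0 d) : HasDerivAt B (K * s ^ (-β)) s := by
    refine ((Real.hasDerivAt_rpow_const (Or.inl hs.1.ne')).const_mul _).congr_deriv ?_
    rw [show 1 - β - 1 = -β by ring]
    field_simp
  have hB0 : B 0 = 0 := by simp only [B, Real.zero_rpow hβ', mul_zero]
  have hsign (c : ℝ) (hc : |c| = 1) : 0 ≤ B d + c * f d := by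
    have hmono : MonotoneOn (fun s => B s + c * f s) (Icc 0 d) := by
      refine monotoneOn_of_hasDerivWithinAt_nonneg (f' := fun s => K * s ^ (-β) + c * f' s)
        (convex_Icc 0 d) (hBcont.continuousOn.add (continuousOn_const.mul hcont))
        (fun s hs => ?_) fun s hs => ?_ <;> rw [interior_Icc] at hs
      · exact ((hBderiv s hs).add ((hderiv s hs).const_mul c)).hasDerivWithinAt
      · have habs : |c * f' s| ≤ K * s ^ (-β) := by
          rw [abs_mul, hc, one_mul]
          exact hbound s hs
        linarith [neg_abs_le (c * f' s)]
    simpa [hB0, hzero] using hmono (left_mem_Icc.2 hd) (right_mem_Icc.2 hd) hd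
  rw [abs_le]
  constructor <;> linarith [hsign 1 (by simp), hsign (-1) (by simp)]

end RealPowers

section MaximumPrinciple

variable {E : Type*} [NormedAddCommGroup E] [InnerProductSpace ℝ E] [FiniteDimensional ℝ E]

lemma HasHessianAt.trace_nonpos_of_isLocalMax {f : E → ℝ} {g : E → E} {A : E →L[ℝ] E} {x : E}
    (h : HasHessianAt f g A x) (hmax : IsLocalMax f x) : LinearMap.trace ℝ E A ≤ 0 := by
  rw [LinearMap.trace_eq_sum_inner _ (stdOrthonormalBasis ℝ E)]
  refine Finset.sum_nonpos fun i _ => ?_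
  rw [real_inner_comm]
  exact h.inner_apply_self_nonpos_of_isLocalMax hmax _

lemma mul_sub_nonpos_of_hasDerivAt_of_isMaxOn_uIcc {f : ℝ → ℝ} {c a t : ℝ}
    (hf : HasDerivAt f c t) (hmax : IsMaxOn f (uIcc t a) t) : (a - t) * c ≤ 0 := by
  have hcone : a - t ∈ posTangentConeAt (uIcc t a) t :=
    sub_mem_posTangentConeAt_of_segment_subset (segment_eq_uIcc t a).subset
  simpa using hmax.localize.hasFDerivWithinAt_nonpos hf.hasFDerivAt.hasFDerivWithinAt hcone

section Parabolic

variable {K U : Set E} {a b : ℝ} {Φ : E → ℝ → ℝ} {Γ : E → ℝ → E} {A : E → ℝ → E →L[ℝ] E}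
  {c : E → ℝ → ℝ}

lemma parabolic_max_principle_of_lt (hK : IsCompact K) (hU : IsOpen U) (hUK : U ⊆ K)
    (hcont : ContinuousOn (fun q : E × ℝ => Φ q.1 q.2) (K ×ˢ Icc a b))
    (hderiv : ∀ x ∈ U, ∀ t ∈ Ioc a b, HasParabolicDerivAt Φ Γ (A x t) (c x t) x t)
    (hlt : ∀ x ∈ U, ∀ t ∈ Ioc a b, c x t < LinearMap.trace ℝ E (A x t))
    (hside : ∀ x ∈ K \ U, ∀ t ∈ Icc a b, Φ x t ≤ 0) (hinit : ∀ x ∈ K, Φ x a ≤ 0) :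
    ∀ x ∈ K, ∀ t ∈ Icc a b, Φ x t ≤ 0 := by
  by_contra! hpos
  obtain ⟨x₁, hx₁, t₁, ht₁, hpos₁⟩ := hpos
  obtain ⟨⟨x, t⟩, ⟨hx, ht⟩, hmax⟩ :=
    (hK.prod isCompact_Icc).exists_isMaxOn ⟨(x₁, t₁), hx₁, ht₁⟩ hcont
  simp only at hx ht
  have hΦ : 0 < Φ x t := hpos₁.trans_le (hmax (show (x₁, t₁) ∈ K ×ˢ Icc a b from ⟨hx₁, ht₁⟩))
  have hxU : x ∈ U := by
    by_contra hxU
    exact (hside x ⟨hx, hxU⟩ t ht).not_gt hΦ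
  have hat : a < t := by
    refine ht.1.lt_of_ne fun hat => ?_
    exact (hinit x hx).not_gt (hat ▸ hΦ)
  have hd := hderiv x hxU t ⟨hat, ht.2⟩
  have hspace : IsLocalMax (Φ · t) x := by
    filter_upwards [hU.mem_nhds hxU] with y hy
    exact hmax (show (y, t) ∈ K ×ˢ Icc a b from ⟨hUK hy, ht⟩)
  have htime : IsMaxOn (Φ x) (uIcc t a) t := fun s hs => by
    rw [uIcc_of_ge hat.le] at hs
    exact hmax (show (x, s) ∈ K ×ˢ Icc a b from ⟨hx, hs.1, hs.2.trans ht.2⟩)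
  have htrace := hd.hessian.trace_nonpos_of_isLocalMax hspace
  have hc := mul_sub_nonpos_of_hasDerivAt_of_isMaxOn_uIcc hd.time htime
  nlinarith [hlt x hxU t ⟨hat, ht.2⟩]

theorem parabolic_max_principle (hK : IsCompact K) (hU : IsOpen U) (hUK : U ⊆ K)
    (hcont : ContinuousOn (fun q : E × ℝ => Φ q.1 q.2) (K ×ˢ Icc a b))
    (hderiv : ∀ x ∈ U, ∀ t ∈ Ioc a b, HasParabolicDerivAt Φ Γ (A x t) (c x t) x t)
    (hle : ∀ x ∈ U, ∀ t ∈ Ioc a b, c x t ≤ LinearMap.trace ℝ E (A x t))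
    (hside : ∀ x ∈ K \ U, ∀ t ∈ Icc a b, Φ x t ≤ 0) (hinit : ∀ x ∈ K, Φ x a ≤ 0) :
    ∀ x ∈ K, ∀ t ∈ Icc a b, Φ x t ≤ 0 := by
  intro x hx t ht
  refine le_of_forall_pos_le_add fun ε hε => ?_
  have hba : 0 < b - a + 1 := by linarith [ht.1, ht.2]
  set κ := ε / (b - a + 1) with hκ
  have hκ0 : 0 < κ := by positivity
  have hperturbed : Φ x t - κ * (t - a) ≤ 0 := by
    refine parabolic_max_principle_of_lt
      (Φ := fun y s => Φ y s - κ * (s - a)) (Γ := fun y s => Γ y s - 0)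
      (A := fun y s => A y s - 0) (c := fun y s => c y s - κ) hK hU hUK
      (hcont.sub (by fun_prop : Continuous fun q : E × ℝ => κ * (q.2 - a)).continuousOn)
      (fun y hy s hs => ?_) (fun y hy s hs => ?_) (fun y hy s hs => ?_) (fun y hy => ?_) x hx t ht
    · exact (hderiv y hy s hs).sub ⟨hasHessianAt_const _,
        by simpa using ((hasDerivAt_id s).sub_const a).const_mul κ⟩
    · simpa using (hle y hy s hs).trans_lt' (sub_lt_self _ hκ0)
    · have := hside y hy s hs
      nlinarith [hs.1]
    · simpa using hinit y hy
  have hκt : κ * (t - a) ≤ ε := by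
    rw [hκ, div_mul_eq_mul_div, div_le_iff₀ hba]
    exact mul_le_mul_of_nonneg_left (by linarith [ht.2]) hε.le
  linarith

end Parabolic

theorem elliptic_comparison {K U : Set E} (hK : IsCompact K) (hU : IsOpen U) (hUK : U ⊆ K)
    (F : E → ℝ) {w ψ : E → ℝ} {g gψ : E → E} {A Aψ : E → E →L[ℝ] E}
    (hwc : ContinuousOn w K) (hψc : ContinuousOn ψ K)
    (hw : ∀ y ∈ U, HasHessianAt w g (A y) y) (hψ : ∀ y ∈ U, HasHessianAt ψ gψ (Aψ y) y)
    (hlt : ∀ y ∈ U, LinearMap.trace ℝ E (Aψ y) + F (gψ y) < LinearMap.trace ℝ E (A y) + F (g y))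
    (hbdry : ∀ y ∈ K \ U, w y ≤ ψ y) : ∀ y ∈ K, w y ≤ ψ y := by
  by_contra! hpos
  obtain ⟨z, hz, hzpos⟩ := hpos
  obtain ⟨y, hy, hmax⟩ := hK.exists_isMaxOn ⟨z, hz⟩ (hwc.sub hψc)
  have hyz : w z - ψ z ≤ w y - ψ y := hmax hz
  have hyU : y ∈ U := by
    by_contra hyU
    linarith [hbdry y ⟨hy, hyU⟩]
  have hd := (hw y hyU).sub (hψ y hyU)
  have hloc : IsLocalMax (fun x => w x - ψ x) y := by
    filter_upwards [hU.mem_nhds hyU] with x hx using hmax (hUK hx)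
  have hgrad : g y = gψ y := sub_eq_zero.1 (hd.gradient_eq_zero_of_isLocalMax hloc)
  have htrace := hd.trace_nonpos_of_isLocalMax hloc
  have hlt' := hlt y hyU
  rw [ContinuousLinearMap.toLinearMap_sub, map_sub] at htrace
  rw [hgrad] at hlt'
  linarith

end MaximumPrinciple

/-- The closed parabolic cylinder of radius `r` with top centre `(x, t)`. -/
def parabolicCylinder {X : Type*} [PseudoMetricSpace X] (x : X) (t r : ℝ) : Set (X × ℝ) :=
  closedBall x r ×ˢ Icc (t - r ^ 2) t

section GradientEstimate

variable {E : Type*} [NormedAddCommGroup E] [InnerProductSpace ℝ E]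

lemma norm_le_of_forall_inner_le {v : E} {C : ℝ} (hC : 0 ≤ C)
    (h : ∀ ξ : E, ‖ξ‖ = 1 → ⟪v, ξ⟫ ≤ C) : ‖v‖ ≤ C := by
  rcases eq_or_ne v 0 with rfl | hv
  · simpa using hC
  · have := h (‖v‖⁻¹ • v) (norm_smul_inv_norm hv)
    rwa [inner_smul_right, real_inner_self_eq_norm_sq, sq,
      inv_mul_cancel_left₀ (norm_ne_zero_iff.2 hv)] at this

section Brandt

variable {x₀ ξ : E} {t₀ r m : ℝ}

/-- Brandt's barrier in the half cylinder `{(x, t) | 0 ≤ ⟪ξ, x - x₀⟫}` of radius `r`: it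
dominates `m` on the lateral and initial boundary and vanishes at the centre. -/
def brandtBarrier (x₀ ξ : E) (t₀ r m k : ℝ) (x : E) (t : ℝ) : ℝ :=
  m / r ^ 2 * (‖x - x₀‖ ^ 2 + (t₀ - t)) + k * (2 * r * ⟪ξ, x - x₀⟫ - ⟪ξ, x - x₀⟫ ^ 2)
lemma le_brandtBarrier {k : ℝ} (hr : 0 < r) (hk : 0 ≤ k) (hξ : ‖ξ‖ = 1) {x : E}
    {t : ℝ} (hx : x ∈ closedBall x₀ r) (hxξ : 0 ≤ ⟪ξ, x - x₀⟫) :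
    m / r ^ 2 * (‖x - x₀‖ ^ 2 + (t₀ - t)) ≤ brandtBarrier x₀ ξ t₀ r m k x t := by
  have hle : ⟪ξ, x - x₀⟫ ≤ r := by
    have := real_inner_le_norm ξ (x - x₀)
    rw [hξ, one_mul] at this
    exact this.trans (mem_closedBall_iff_norm.1 hx)
  exact le_add_of_nonneg_right (mul_nonneg hk (by nlinarith))
/-- The reflection in the hyperplane through `x₀` orthogonal to `ξ`, in the affine form required
by `HasHessianAt.comp_affine`. -/
def reflectAt (x₀ ξ x : E) : E :=
  (x₀ - (ℝ ∙ ξ)ᗮ.reflection x₀) + (ℝ ∙ ξ)ᗮ.reflection x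

lemma continuous_reflectAt (x₀ ξ : E) : Continuous (reflectAt x₀ ξ) := by
  unfold reflectAt
  fun_prop

lemma reflectAt_eq (hξ : ‖ξ‖ = 1) (x : E) :
    reflectAt x₀ ξ x = x - (2 * ⟪ξ, x - x₀⟫) • ξ := by
  simp only [reflectAt, Submodule.reflection_orthogonal_apply,
    Submodule.reflection_singleton_apply, hξ, inner_sub_right]
  simp only [Real.ringHom_apply, one_pow, div_one, neg_sub, sub_sub_cancel]
  module

lemma norm_reflectAt_sub (x₀ ξ x : E) : ‖reflectAt x₀ ξ x - x₀‖ = ‖x - x₀‖ := by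
  rw [← (ℝ ∙ ξ)ᗮ.reflection.norm_map (x - x₀), map_sub, reflectAt]
  congr 1
  abel

variable {N : ℝ} {w : E → ℝ → ℝ} {G : E → ℝ → E} {H : E → ℝ → E →L[ℝ] E} {w' : E → ℝ → ℝ}

lemma reflectAt_mem_closedBall {x : E} (hx : x ∈ closedBall x₀ r) :
    reflectAt x₀ ξ x ∈ closedBall x₀ r := by
  rwa [mem_closedBall_iff_norm, norm_reflectAt_sub, ← mem_closedBall_iff_norm]

lemma reflectAt_mem_ball {x : E} (hx : x ∈ ball x₀ r) : reflectAt x₀ ξ x ∈ ball x₀ r := by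
  rwa [mem_ball_iff_norm, norm_reflectAt_sub, ← mem_ball_iff_norm]

lemma sub_comp_reflectAt_le_brandtBarrier_of_boundary {k t : ℝ} {x : E} (hr : 0 < r)
    (hk : 0 ≤ k) (hξ : ‖ξ‖ = 1) (hm : ∀ y ∈ closedBall x₀ r, |w y t| ≤ m)
    (ht : t ∈ Icc (t₀ - r ^ 2) t₀) (hx : x ∈ closedBall x₀ r) (hxξ : 0 ≤ ⟪ξ, x - x₀⟫)
    (hbdry : ‖x - x₀‖ = r ∨ ⟪ξ, x - x₀⟫ = 0 ∨ t = t₀ - r ^ 2) :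
    w x t - w (reflectAt x₀ ξ x) t - 2 * brandtBarrier x₀ ξ t₀ r m k x t ≤ 0 := by
  have hm0 : 0 ≤ m := (abs_nonneg _).trans (hm x hx)
  have hbarrier := le_brandtBarrier (m := m) (t₀ := t₀) (t := t) hr hk hξ hx hxξ
  have ht0 : 0 ≤ t₀ - t := sub_nonneg.2 ht.2
  have hnonneg : 0 ≤ m / r ^ 2 * (‖x - x₀‖ ^ 2 + (t₀ - t)) := by positivity
  have hlarge : r ^ 2 ≤ ‖x - x₀‖ ^ 2 + (t₀ - t) → m ≤ m / r ^ 2 * (‖x - x₀‖ ^ 2 + (t₀ - t)) := by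
    intro h
    calc m = m / r ^ 2 * r ^ 2 := by field_simp
      _ ≤ _ := by gcongr
  have h₁ := (abs_le.1 (hm x hx)).2
  have h₂ := (abs_le.1 (hm _ (reflectAt_mem_closedBall (ξ := ξ) hx))).1
  rcases hbdry with h | h | h
  · linarith [hlarge (by rw [h]; linarith)]
  · rw [reflectAt_eq hξ, h, mul_zero, zero_smul, sub_zero]
    linarith
  · linarith [hlarge (by rw [h]; nlinarith [sq_nonneg ‖x - x₀‖])]

variable [FiniteDimensional ℝ E]

lemma trace_adjoint_comp_comp (L : E ≃ₗᵢ[ℝ] E) (A : E →L[ℝ] E) :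
    LinearMap.trace ℝ E ((L : E →L[ℝ] E).adjoint ∘L A ∘L (L : E →L[ℝ] E) : E →L[ℝ] E) =
      LinearMap.trace ℝ E A := by
  have hL : (L : E →L[ℝ] E) ∘L (L : E →L[ℝ] E).adjoint = .id ℝ E := by
    ext v
    simp [LinearIsometryEquiv.adjoint_eq_symm]
  rw [ContinuousLinearMap.toLinearMap_comp, LinearMap.trace_comp_comm',
    ← ContinuousLinearMap.toLinearMap_comp, ContinuousLinearMap.comp_assoc, hL,
    ContinuousLinearMap.comp_id]

lemma exists_hasParabolicDerivAt_brandtBarrier (x₀ : E) (hξ : ‖ξ‖ = 1) (t₀ r m k : ℝ) :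
    ∃ (Γ : E → ℝ → E) (A : E →L[ℝ] E),
      (∀ x t, HasParabolicDerivAt (brandtBarrier x₀ ξ t₀ r m k) Γ A (-(m / r ^ 2)) x t) ∧
      LinearMap.trace ℝ E A = 2 * (Module.finrank ℝ E * (m / r ^ 2) - k) := by
  refine ⟨_, _, fun x t => ⟨(((hasHessianAt_norm_sub_sq x₀).add
    (hasHessianAt_const (t₀ - t))).const_mul (m / r ^ 2)).add ((hasHessianAt_comp_inner
      (φ := fun s => 2 * r * s - s ^ 2) (φ' := fun s => 2 * r - 2 * s) (c := -2) x₀ ξ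
      (fun s => ?_) ?_).const_mul k), ?_⟩, ?_⟩
  · simpa using ((hasDerivAt_id s).const_mul (2 * r)).fun_sub ((hasDerivAt_id s).fun_pow 2)
  · simpa using ((hasDerivAt_id _).const_mul (2 : ℝ)).const_sub (2 * r)
  · exact ((((hasDerivAt_id t).const_sub t₀).const_add (‖x - x₀‖ ^ 2)).const_mul
      (m / r ^ 2)).add_const _ |>.congr_deriv (by ring)
  · simp [InnerProductSpace.trace_rankOne, hξ]
    ring

lemma sub_comp_reflectAt_le_brandtBarrier (hr : 0 < r) (hξ : ‖ξ‖ = 1)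
    (hcont : ContinuousOn (fun q : E × ℝ => w q.1 q.2) (parabolicCylinder x₀ t₀ r))
    (hderiv : ∀ x ∈ ball x₀ r, ∀ t ∈ Ioc (t₀ - r ^ 2) t₀,
      HasParabolicDerivAt w G (H x t) (w' x t) x t)
    (hN : ∀ x ∈ ball x₀ r, ∀ t ∈ Ioc (t₀ - r ^ 2) t₀, |w' x t - LinearMap.trace ℝ E (H x t)| ≤ N)
    (hm : ∀ x ∈ closedBall x₀ r, ∀ t ∈ Icc (t₀ - r ^ 2) t₀, |w x t| ≤ m) {k : ℝ}
    (hk : k = ((2 * Module.finrank ℝ E + 1) * (m / r ^ 2) + N) / 2) (hk0 : 0 ≤ k) :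
    ∀ x ∈ closedBall x₀ r ∩ {x | 0 ≤ ⟪ξ, x - x₀⟫}, ∀ t ∈ Icc (t₀ - r ^ 2) t₀,
      w x t - w (reflectAt x₀ ξ x) t - 2 * brandtBarrier x₀ ξ t₀ r m k x t ≤ 0 := by
  obtain ⟨Γ, A, hbarrier, hA⟩ := exists_hasParabolicDerivAt_brandtBarrier x₀ hξ t₀ r m k
  have hinner : Continuous fun x : E => ⟪ξ, x - x₀⟫ := by fun_prop
  set R : E →L[ℝ] E := ((ℝ ∙ ξ)ᗮ.reflection : E →L[ℝ] E)
  have hcylinder : (closedBall x₀ r ∩ {x | 0 ≤ ⟪ξ, x - x₀⟫}) ×ˢ Icc (t₀ - r ^ 2) t₀ ⊆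
      parabolicCylinder x₀ t₀ r := prod_mono inter_subset_left subset_rfl
  have hcont_reflect : ContinuousOn (fun q : E × ℝ => w (reflectAt x₀ ξ q.1) q.2)
      (parabolicCylinder x₀ t₀ r) := by
    have hc := continuous_reflectAt x₀ ξ
    exact hcont.comp (f := fun q : E × ℝ => (reflectAt x₀ ξ q.1, q.2))
      (Continuous.continuousOn (by fun_prop)) fun q hq => ⟨reflectAt_mem_closedBall hq.1, hq.2⟩
  refine parabolic_max_principle (U := ball x₀ r ∩ {x | 0 < ⟪ξ, x - x₀⟫})
    (Φ := fun x t => w x t - w (reflectAt x₀ ξ x) t - 2 * brandtBarrier x₀ ξ t₀ r m k x t)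
    (Γ := fun x t => G x t - R.adjoint (G (reflectAt x₀ ξ x) t) - (2 : ℝ) • Γ x t)
    (A := fun x t => H x t - R.adjoint ∘L H (reflectAt x₀ ξ x) t ∘L R - (2 : ℝ) • A)
    (c := fun x t => w' x t - w' (reflectAt x₀ ξ x) t - 2 * -(m / r ^ 2))
    ((isCompact_closedBall x₀ r).inter_right (isClosed_le continuous_const hinner))
    (isOpen_ball.inter (isOpen_lt continuous_const hinner))
    (inter_subset_inter ball_subset_closedBall fun x (hx : 0 < ⟪ξ, x - x₀⟫) => hx.le)
    (((hcont.mono hcylinder).sub (hcont_reflect.mono hcylinder)).sub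
      (Continuous.continuousOn (by unfold brandtBarrier; fun_prop)))
    (fun x hx t ht => ?_) (fun x hx t ht => ?_) (fun x hx t ht => ?_) (fun x hx => ?_)
  · exact ((hderiv x hx.1 t ht).sub (HasParabolicDerivAt.comp_affine (b := x₀ - R x₀) (L := R)
      (hderiv (reflectAt x₀ ξ x) (reflectAt_mem_ball hx.1) t ht))).sub
        ((hbarrier x t).const_mul 2)
  · have h₁ := abs_le.1 (hN x hx.1 t ht)
    have h₂ := abs_le.1 (hN _ (reflectAt_mem_ball (ξ := ξ) hx.1) t ht)
    rw [ContinuousLinearMap.toLinearMap_sub, ContinuousLinearMap.toLinearMap_sub, map_sub, map_sub,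
      trace_adjoint_comp_comp, ContinuousLinearMap.toLinearMap_smul, map_smul, hA, smul_eq_mul, hk]
    linarith
  · refine sub_comp_reflectAt_le_brandtBarrier_of_boundary hr hk0 hξ
      (fun y hy => hm y hy t ht) ht hx.1.1 hx.1.2 ?_
    by_contra! hne
    exact hx.2 ⟨mem_ball_iff_norm.2 ((mem_closedBall_iff_norm.1 hx.1.1).lt_of_ne hne.1),
      lt_of_le_of_ne hx.1.2 hne.2.1.symm⟩
  · have hinit : t₀ - r ^ 2 ∈ Icc (t₀ - r ^ 2) t₀ := ⟨le_rfl, by nlinarith⟩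
    exact sub_comp_reflectAt_le_brandtBarrier_of_boundary hr hk0 hξ
      (fun y hy => hm y hy _ hinit) hinit hx.1 hx.2 (by simp)

lemma inner_gradient_le_of_heat_bound (hr : 0 < r) (hξ : ‖ξ‖ = 1)
    (hcont : ContinuousOn (fun q : E × ℝ => w q.1 q.2) (parabolicCylinder x₀ t₀ r))
    (hderiv : ∀ x ∈ ball x₀ r, ∀ t ∈ Ioc (t₀ - r ^ 2) t₀,
      HasParabolicDerivAt w G (H x t) (w' x t) x t)
    (hN : ∀ x ∈ ball x₀ r, ∀ t ∈ Ioc (t₀ - r ^ 2) t₀, |w' x t - LinearMap.trace ℝ E (H x t)| ≤ N)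
    (hm : ∀ x ∈ closedBall x₀ r, ∀ t ∈ Icc (t₀ - r ^ 2) t₀, |w x t| ≤ m) {k : ℝ}
    (hk : k = ((2 * Module.finrank ℝ E + 1) * (m / r ^ 2) + N) / 2) (hk0 : 0 ≤ k) :
    ⟪G x₀ t₀, ξ⟫ ≤ 2 * r * k := by
  have ht₀ : t₀ ∈ Ioc (t₀ - r ^ 2) t₀ := ⟨by nlinarith [sq_pos_of_pos hr], le_rfl⟩
  have hgrad : HasGradientAt (w · t₀) (G x₀ t₀) x₀ :=
    (hderiv x₀ (mem_ball_self hr) t₀ ht₀).hessian.gradient.self_of_nhds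
  set φ : ℝ → ℝ := fun s => w (x₀ + s • ξ) t₀ - w (x₀ + s • -ξ) t₀ -
    2 * (m / r ^ 2 * s ^ 2 + k * (2 * r * s - s ^ 2)) with hφ
  have hφ0 : HasDerivAt φ (2 * ⟪G x₀ t₀, ξ⟫ - 4 * r * k) 0 := by
    have hplus := hasDerivAt_comp_line (x := x₀) (d := ξ) (s := 0) (by simpa using hgrad)
    have hminus := hasDerivAt_comp_line (x := x₀) (d := -ξ) (s := 0) (by simpa using hgrad)
    have hid := hasDerivAt_id (0 : ℝ)
    refine ((hplus.sub hminus).sub (((hid.pow 2).const_mul (m / r ^ 2)).add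
      (((hid.const_mul (2 * r)).sub (hid.pow 2)).const_mul k) |>.const_mul 2)).congr_deriv ?_
    rw [inner_neg_right]
    simp only [sub_neg_eq_add, Nat.cast_ofNat, id_eq, Nat.add_one_sub_one, pow_one, mul_zero,
      mul_one, sub_zero, zero_add]
    ring
  have hmax : IsMaxOn φ (uIcc 0 r) 0 := by
    intro s hs
    rw [uIcc_of_le hr.le] at hs
    have hnorm : ‖s • ξ‖ = s := by rw [norm_smul, hξ, mul_one, Real.norm_of_nonneg hs.1]
    have hinner : ⟪ξ, s • ξ⟫ = s := by
      rw [inner_smul_right, real_inner_self_eq_norm_sq, hξ, one_pow, mul_one]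
    have hle := sub_comp_reflectAt_le_brandtBarrier hr hξ hcont hderiv hN hm hk hk0 (x₀ + s • ξ)
      ⟨by simpa [hnorm] using hs.2, by simpa [hinner] using hs.1⟩ t₀ (Ioc_subset_Icc_self ht₀)
    rw [reflectAt_eq hξ, brandtBarrier, add_sub_cancel_left, hinner, hnorm,
      show x₀ + s • ξ - (2 * s) • ξ = x₀ + s • -ξ by module] at hle
    simpa [hφ] using hle
  have hderiv_le := mul_sub_nonpos_of_hasDerivAt_of_isMaxOn_uIcc hφ0 hmax
  nlinarith

theorem norm_gradient_le_of_heat_bound (hr : 0 < r)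
    (hcont : ContinuousOn (fun q : E × ℝ => w q.1 q.2) (parabolicCylinder x₀ t₀ r))
    (hderiv : ∀ x ∈ ball x₀ r, ∀ t ∈ Ioc (t₀ - r ^ 2) t₀,
      HasParabolicDerivAt w G (H x t) (w' x t) x t)
    (hN : ∀ x ∈ ball x₀ r, ∀ t ∈ Ioc (t₀ - r ^ 2) t₀, |w' x t - LinearMap.trace ℝ E (H x t)| ≤ N)
    (hm : ∀ x ∈ closedBall x₀ r, ∀ t ∈ Icc (t₀ - r ^ 2) t₀, |w x t| ≤ m) :
    ‖G x₀ t₀‖ ≤ (2 * Module.finrank ℝ E + 1) * (m / r) + N * r := by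
  have hx₀ : x₀ ∈ ball x₀ r := mem_ball_self hr
  have ht₀ : t₀ ∈ Ioc (t₀ - r ^ 2) t₀ := ⟨by nlinarith [sq_pos_of_pos hr], le_rfl⟩
  have hm0 : 0 ≤ m :=
    (abs_nonneg _).trans (hm x₀ (ball_subset_closedBall hx₀) t₀ (Ioc_subset_Icc_self ht₀))
  have hN0 : 0 ≤ N := (abs_nonneg _).trans (hN x₀ hx₀ t₀ ht₀)
  have hk0 : 0 ≤ ((2 * Module.finrank ℝ E + 1) * (m / r ^ 2) + N) / 2 := by positivity
  refine norm_le_of_forall_inner_le (by positivity) fun ξ hξ => ?_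
  refine (inner_gradient_le_of_heat_bound hr hξ hcont hderiv hN hm rfl hk0).trans_eq ?_
  field_simp

end Brandt

end GradientEstimate

section Absorption

variable {X : Type*} [PseudoMetricSpace X] {x x₀ : X} {t t₀ r ρ : ℝ}

/-- The parabolic distance from `(x, t)` to the lateral and initial boundary of
`parabolicCylinder x₀ t₀ r`. -/
def parabolicDepth (x₀ : X) (t₀ r : ℝ) (q : X × ℝ) : ℝ :=
  min (r - dist q.1 x₀) √(q.2 - (t₀ - r ^ 2))

lemma continuous_parabolicDepth (x₀ : X) (t₀ r : ℝ) : Continuous (parabolicDepth x₀ t₀ r) := by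
  unfold parabolicDepth
  fun_prop

lemma parabolicDepth_nonneg {q : X × ℝ} (hq : q ∈ parabolicCylinder x₀ t₀ r) :
    0 ≤ parabolicDepth x₀ t₀ r q :=
  le_min (sub_nonneg.2 hq.1) (Real.sqrt_nonneg _)

lemma parabolicDepth_center (hr : 0 ≤ r) : parabolicDepth x₀ t₀ r (x₀, t₀) = r := by
  simp [parabolicDepth, Real.sqrt_sq hr]

lemma parabolicDepth_le_two_mul {q q' : X × ℝ} (hq : q ∈ parabolicCylinder x₀ t₀ r)
    (hρ : 2 * ρ ≤ parabolicDepth x₀ t₀ r q) (hρ0 : 0 ≤ ρ) (hq' : q' ∈ parabolicCylinder q.1 q.2 ρ) :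
    parabolicDepth x₀ t₀ r q ≤ 2 * parabolicDepth x₀ t₀ r q' := by
  set D := parabolicDepth x₀ t₀ r q
  have hD : 0 ≤ D := parabolicDepth_nonneg hq
  have hspace : D ≤ r - dist q.1 x₀ := min_le_left _ _
  have htime : D ^ 2 ≤ q.2 - (t₀ - r ^ 2) :=
    (Real.le_sqrt hD (by linarith [hq.2.1])).1 (min_le_right _ _)
  have hdist : dist q'.1 x₀ ≤ ρ + dist q.1 x₀ :=
    (dist_triangle _ q.1 _).trans (add_le_add_left hq'.1 _)
  have ht' : q.2 - ρ ^ 2 ≤ q'.2 := hq'.2.1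
  rw [← div_le_iff₀' two_pos]
  refine le_min (by linarith) (Real.le_sqrt_of_sq_le ?_)
  nlinarith

lemma parabolicCylinder_subset_of_two_mul_le_depth {q : X × ℝ}
    (hq : q ∈ parabolicCylinder x₀ t₀ r) (hρ : 2 * ρ ≤ parabolicDepth x₀ t₀ r q) (hρ0 : 0 ≤ ρ) :
    parabolicCylinder q.1 q.2 ρ ⊆ parabolicCylinder x₀ t₀ r := by
  have hspace : parabolicDepth x₀ t₀ r q ≤ r - dist q.1 x₀ := min_le_left _ _
  have htime : parabolicDepth x₀ t₀ r q ^ 2 ≤ q.2 - (t₀ - r ^ 2) :=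
    (Real.le_sqrt (by linarith) (by linarith [hq.2.1])).1 (min_le_right _ _)
  refine prod_mono (closedBall_subset_closedBall' (by linarith)) (Icc_subset_Icc ?_ hq.2.2)
  nlinarith

/-- The constant `1 / (2 * (1 + 2 * c₂ * r))` is a radius small enough for the term in `S` on the
right to be absorbed by the left hand side. -/
lemma le_of_le_absorbable {c₁ c₂ r D S θ : ℝ} (hr : 0 < r) (hc₂ : 0 ≤ c₂) (hD : 0 < D)
    (hDr : D ≤ r) (hS : 0 ≤ S) (hθ : θ = 1 / (2 * (1 + 2 * c₂ * r)))
    (h : S ≤ D * (c₁ / (θ * D) + c₂ * (θ * D) * (2 * S / D))) :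
    S ≤ 4 * c₁ * (1 + 2 * c₂ * r) := by
  have hθ0 : 0 < θ := by
    rw [hθ]
    positivity
  have habsorb : 2 * c₂ * θ * D ≤ 1 / 2 := by
    calc 2 * c₂ * θ * D ≤ 2 * c₂ * θ * r := by gcongr
      _ ≤ 1 / 2 := by
        rw [hθ]
        field_simp
        nlinarith [mul_nonneg hc₂ hr.le]
  have hexpand : D * (c₁ / (θ * D) + c₂ * (θ * D) * (2 * S / D)) =
      2 * c₁ * (1 + 2 * c₂ * r) + 2 * c₂ * θ * D * S := by
    have hc₁ : D * (c₁ / (θ * D)) = 2 * c₁ * (1 + 2 * c₂ * r) := by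
      rw [hθ]
      field_simp
    rw [mul_add, hc₁]
    field_simp
  nlinarith

lemma le_of_interior_estimate [ProperSpace X] {f : X × ℝ → ℝ} {c₁ c₂ : ℝ} (hr : 0 < r)
    (hc₁ : 0 ≤ c₁) (hc₂ : 0 ≤ c₂) (hf : ContinuousOn f (parabolicCylinder x₀ t₀ r))
    (hf0 : ∀ q ∈ parabolicCylinder x₀ t₀ r, 0 ≤ f q)
    (hest : ∀ q ρ B, 0 < ρ → parabolicCylinder q.1 q.2 ρ ⊆ parabolicCylinder x₀ t₀ r →
      (∀ q' ∈ parabolicCylinder q.1 q.2 ρ, f q' ≤ B) → f q ≤ c₁ / ρ + c₂ * ρ * B) :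
    f (x₀, t₀) ≤ 4 * c₁ * (1 + 2 * c₂ * r) / r := by
  set D := parabolicDepth x₀ t₀ r
  have hcentre : (x₀, t₀) ∈ parabolicCylinder x₀ t₀ r :=
    ⟨mem_closedBall_self hr.le, by nlinarith, le_rfl⟩
  obtain ⟨q, hq, hmax⟩ := ((isCompact_closedBall x₀ r).prod isCompact_Icc).exists_isMaxOn
    ⟨_, hcentre⟩ ((continuous_parabolicDepth x₀ t₀ r).continuousOn.mul hf)
  set S := D q * f q with hS
  have hS₀ : r * f (x₀, t₀) ≤ S := by
    simpa [parabolicDepth_center hr.le] using hmax hcentre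
  suffices hSle : S ≤ 4 * c₁ * (1 + 2 * c₂ * r) by
    rw [le_div_iff₀' hr]
    exact hS₀.trans hSle
  have hD0 : 0 ≤ D q := parabolicDepth_nonneg hq
  rcases hD0.eq_or_lt with hD | hD
  · rw [hS, ← hD, zero_mul]
    positivity
  set θ := 1 / (2 * (1 + 2 * c₂ * r)) with hθ
  have hDr : D q ≤ r := (min_le_left _ _).trans (sub_le_self _ dist_nonneg)
  have hθ0 : 0 < θ := by positivity
  have hθ_half : θ ≤ 1 / 2 := by
    rw [hθ]
    gcongr
    nlinarith [mul_nonneg hc₂ hr.le]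
  have hρ : 2 * (θ * D q) ≤ D q := by nlinarith
  have hsub := parabolicCylinder_subset_of_two_mul_le_depth hq hρ (by positivity)
  have hB : ∀ q' ∈ parabolicCylinder q.1 q.2 (θ * D q), f q' ≤ 2 * S / D q := by
    intro q' hq'
    have hdepth := parabolicDepth_le_two_mul hq hρ (by positivity) hq'
    have hq'S : D q' * f q' ≤ S := hmax (hsub hq')
    rw [le_div_iff₀' hD]
    nlinarith [hf0 q' (hsub hq')]
  have hfq := hest q (θ * D q) (2 * S / D q) (by positivity) hsub hB
  exact le_of_le_absorbable hr hc₂ hD hDr (mul_nonneg hD0 (hf0 q hq)) hθ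
    (mul_le_mul_of_nonneg_left hfq hD0)

end Absorption

section HessianEstimate

lemma add_smul_mem_parabolicCylinder {V : Type*} [SeminormedAddCommGroup V] [NormedSpace ℝ V]
    {x₀ d : V} {t₀ r : ℝ} (hd : ‖d‖ ≤ r / 2) (x : V) (t a : ℝ)
    (hq : (x, t) ∈ parabolicCylinder x₀ t₀ (r / 2)) (ha : a ∈ Icc (0 : ℝ) 1) :
    (x + a • d, t) ∈ parabolicCylinder x₀ t₀ r := by
  have had : ‖a • d‖ ≤ r / 2 := by
    rw [norm_smul, Real.norm_of_nonneg ha.1]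
    nlinarith [ha.2, norm_nonneg d]
  obtain ⟨hx, ht⟩ := hq
  rw [mem_closedBall_iff_norm] at hx
  refine ⟨mem_closedBall_iff_norm.2 ?_, ?_, ht.2⟩
  · rw [add_sub_right_comm]
    exact (norm_add_le _ _).trans (by linarith)
  · nlinarith [ht.1]

variable {E : Type*} [NormedAddCommGroup E] [InnerProductSpace ℝ E] [FiniteDimensional ℝ E]
  {u : E → ℝ → ℝ} {G : E → ℝ → E} {H : E → ℝ → E →L[ℝ] E} {u' : E → ℝ → ℝ} {F : E → ℝ}
  {s : Set E} {Λ : NNReal} {x₀ d : E} {t₀ r m B : ℝ}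

/-- `u` is a classical solution of the viscous Hamilton–Jacobi equation `u_t - Δu = F(∇u)` on `Q`,
with spatial gradient `G`, spatial Hessian `H` and time derivative `u'`. -/
structure IsHamiltonJacobiOn (F : E → ℝ) (u : E → ℝ → ℝ) (G : E → ℝ → E) (H : E → ℝ → E →L[ℝ] E)
    (u' : E → ℝ → ℝ) (Q : Set (E × ℝ)) : Prop where
  hasParabolicDerivAt : ∀ q ∈ Q, HasParabolicDerivAt u G (H q.1 q.2) (u' q.1 q.2) q.1 q.2
  equation : ∀ q ∈ Q, u' q.1 q.2 - LinearMap.trace ℝ E (H q.1 q.2) = F (G q.1 q.2)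
  continuousOn : ContinuousOn (fun q => u q.1 q.2) Q
  continuousOn_gradient : ContinuousOn (fun q => G q.1 q.2) Q
  continuousOn_hessian : ContinuousOn (fun q => H q.1 q.2) Q

namespace IsHamiltonJacobiOn

lemma mono {Q Q' : Set (E × ℝ)} (h : IsHamiltonJacobiOn F u G H u' Q) (hQ : Q' ⊆ Q) :
    IsHamiltonJacobiOn F u G H u' Q' :=
  ⟨fun q hq => h.hasParabolicDerivAt q (hQ hq), fun q hq => h.equation q (hQ hq),
    h.continuousOn.mono hQ, h.continuousOn_gradient.mono hQ, h.continuousOn_hessian.mono hQ⟩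

lemma norm_gradient_sub_le (h : IsHamiltonJacobiOn F u G H u' (parabolicCylinder x₀ t₀ r))
    (hr : 0 < r) (hF : LipschitzOnWith Λ F s)
    (hG : ∀ q ∈ parabolicCylinder x₀ t₀ r, G q.1 q.2 ∈ s)
    (hm : ∀ q ∈ parabolicCylinder x₀ t₀ r, |⟪G q.1 q.2, d⟫| ≤ m)
    (hB : ∀ q ∈ parabolicCylinder x₀ t₀ r, ‖H q.1 q.2 d‖ ≤ B) (hd : ‖d‖ ≤ r / 2) :
    ‖G (x₀ + d) t₀ - G x₀ t₀‖ ≤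
      2 * (2 * Module.finrank ℝ E + 1) * m / r + Λ / 2 * r * B := by
  have hseg := @add_smul_mem_parabolicCylinder E _ _ x₀ d t₀ r hd
  have hshift (x : E) (t : ℝ) (hq : (x, t) ∈ parabolicCylinder x₀ t₀ (r / 2)) :
      (x + d, t) ∈ parabolicCylinder x₀ t₀ r := by
    simpa using hseg x t 1 hq (right_mem_Icc.2 zero_le_one)
  have hsub (x : E) (t : ℝ) (hq : (x, t) ∈ parabolicCylinder x₀ t₀ (r / 2)) :
      (x, t) ∈ parabolicCylinder x₀ t₀ r := by
    simpa using hseg x t 0 hq (left_mem_Icc.2 zero_le_one)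
  have hmem (x : E) (hx : x ∈ ball x₀ (r / 2)) (t : ℝ) (ht : t ∈ Ioc (t₀ - (r / 2) ^ 2) t₀) :
      (x, t) ∈ parabolicCylinder x₀ t₀ (r / 2) :=
    ⟨ball_subset_closedBall hx, Ioc_subset_Icc_self ht⟩
  have hbrandt := norm_gradient_le_of_heat_bound (w := fun x t => u (x + d) t - u x t)
    (G := fun x t => G (x + d) t - G x t) (H := fun x t => H (x + d) t - H x t)
    (w' := fun x t => u' (x + d) t - u' x t) (x₀ := x₀) (t₀ := t₀) (m := m) (N := Λ * B)
    (half_pos hr) ?_ ?_ ?_ ?_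
  · refine hbrandt.trans_eq ?_
    field_simp
  · exact (h.continuousOn.comp (f := fun q : E × ℝ => (q.1 + d, q.2))
      (Continuous.continuousOn (by fun_prop)) fun q => hshift q.1 q.2).sub
      (h.continuousOn.mono fun q => hsub q.1 q.2)
  · intro x hx t ht
    exact (h.hasParabolicDerivAt _ (hshift _ _ (hmem x hx t ht))).comp_const_add.sub
      (h.hasParabolicDerivAt _ (hsub _ _ (hmem x hx t ht)))
  · intro x hx t ht
    have hq := hmem x hx t ht
    have hgrad : ‖G (x + d) t - G x t‖ ≤ B := norm_sub_le_of_norm_fderiv_apply_le (g := (G · t))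
      (A := (H · t)) (fun a ha => (h.hasParabolicDerivAt _ (hseg x t a hq ha)).hessian.hasFDerivAt)
      (fun a ha => hB _ (hseg x t a hq ha))
    rw [ContinuousLinearMap.toLinearMap_sub, map_sub, sub_sub_sub_comm,
      h.equation _ (hshift x t hq), h.equation _ (hsub x t hq)]
    exact (hF.norm_sub_le (hG _ (hshift x t hq)) (hG _ (hsub x t hq))).trans (by gcongr)
  · intro x hx t ht
    exact abs_sub_le_of_inner_gradient_le (f := (u · t)) (g := (G · t))
      (fun a ha =>
        (h.hasParabolicDerivAt _ (hseg x t a ⟨hx, ht⟩ ha)).hessian.gradient.self_of_nhds)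
      (fun a ha => hm _ (hseg x t a ⟨hx, ht⟩ ha))

lemma norm_hessian_apply_le_of_bound
    (h : IsHamiltonJacobiOn F u G H u' (parabolicCylinder x₀ t₀ r)) (hr : 0 < r)
    (hF : LipschitzOnWith Λ F s) (hG : ∀ q ∈ parabolicCylinder x₀ t₀ r, G q.1 q.2 ∈ s)
    (hm : ∀ q ∈ parabolicCylinder x₀ t₀ r, |⟪G q.1 q.2, d⟫| ≤ m)
    (hB : ∀ q ∈ parabolicCylinder x₀ t₀ r, ‖H q.1 q.2 d‖ ≤ B) :
    ‖H x₀ t₀ d‖ ≤ 2 * (2 * Module.finrank ℝ E + 1) * m / r + Λ / 2 * r * B := by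
  have hcentre : (x₀, t₀) ∈ parabolicCylinder x₀ t₀ r :=
    ⟨mem_closedBall_self hr.le, by nlinarith, le_rfl⟩
  have hm0 : 0 ≤ m := (abs_nonneg _).trans (hm _ hcentre)
  have hB0 : 0 ≤ B := (norm_nonneg _).trans (hB _ hcentre)
  have hline : HasDerivAt (fun a : ℝ => x₀ + a • d) d 0 := by
    simpa using ((hasDerivAt_id (0 : ℝ)).smul_const d).const_add x₀
  have hgrad : HasFDerivAt (G · t₀) (H x₀ t₀) (x₀ + (0 : ℝ) • d) := by
    simpa using (h.hasParabolicDerivAt _ hcentre).hessian.hasFDerivAt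
  have hderiv : HasDerivAt (fun a : ℝ => G (x₀ + a • d) t₀) (H x₀ t₀ d) 0 :=
    hgrad.comp_hasDerivAt (f := fun a : ℝ => x₀ + a • d) 0 hline
  refine hderiv.le_of_lip' (by positivity) ?_
  have hsmall : ∀ᶠ a : ℝ in 𝓝 0, ‖a • d‖ ≤ r / 2 := by
    have hcont : Continuous fun a : ℝ => ‖a • d‖ := by fun_prop
    exact (hcont.tendsto' 0 0 (by simp)).eventually_le_const (half_pos hr)
  filter_upwards [hsmall] with a ha
  have hincr := h.norm_gradient_sub_le hr hF hG (d := a • d) (m := |a| * m) (B := |a| * B)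
    (fun q hq => by
      rw [inner_smul_right, abs_mul]
      gcongr
      exact hm q hq)
    (fun q hq => by
      rw [map_smul, norm_smul, Real.norm_eq_abs]
      gcongr
      exact hB q hq) ha
  rw [zero_smul, add_zero, sub_zero, Real.norm_eq_abs]
  refine hincr.trans_eq ?_
  ring

theorem norm_hessian_apply_le (h : IsHamiltonJacobiOn F u G H u' (parabolicCylinder x₀ t₀ r))
    (hr : 0 < r) (hF : LipschitzOnWith Λ F s)
    (hG : ∀ q ∈ parabolicCylinder x₀ t₀ r, G q.1 q.2 ∈ s)
    (hm : ∀ q ∈ parabolicCylinder x₀ t₀ r, |⟪G q.1 q.2, d⟫| ≤ m) :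
    ‖H x₀ t₀ d‖ ≤ 8 * (2 * Module.finrank ℝ E + 1) * m * (1 + Λ * r) / r := by
  have hm0 : 0 ≤ m :=
    (abs_nonneg _).trans (hm (x₀, t₀) ⟨mem_closedBall_self hr.le, by nlinarith, le_rfl⟩)
  refine (le_of_interior_estimate (f := fun q => ‖H q.1 q.2 d‖)
    (c₁ := 2 * (2 * Module.finrank ℝ E + 1) * m) (c₂ := Λ / 2) hr (by positivity) (by positivity)
    (h.continuousOn_hessian.clm_apply continuousOn_const).norm (fun _ _ => norm_nonneg _)
    fun q ρ B hρ hsub hB => (h.mono hsub).norm_hessian_apply_le_of_bound hρ hF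
      (fun q' hq' => hG q' (hsub hq')) (fun q' hq' => hm q' (hsub hq')) hB).trans_eq ?_
  ring

end IsHamiltonJacobiOn

end HessianEstimate

section FlatBox

variable {E : Type*} [NormedAddCommGroup E] [InnerProductSpace ℝ E]
  {ν d y : E} {a A R η k c K m σ : ℝ}

/-- The cylinder around the axis `ℝ ν` of heights between `a` and `A` and radius `R`, for a unit
vector `ν`. -/
def flatBox (ν : E) (a A R : ℝ) : Set E :=
  {y | ⟪ν, y⟫ ∈ Icc a A ∧ ‖y - ⟪ν, y⟫ • ν‖ ≤ R}

lemma norm_le_of_mem_flatBox (hν : ‖ν‖ = 1) (ha : 0 ≤ a) (hy : y ∈ flatBox ν a A R) :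
    ‖y‖ ≤ A + R := by
  calc ‖y‖ = ‖⟪ν, y⟫ • ν + (y - ⟪ν, y⟫ • ν)‖ := by rw [add_sub_cancel]
    _ ≤ ‖⟪ν, y⟫ • ν‖ + ‖y - ⟪ν, y⟫ • ν‖ := norm_add_le _ _
    _ ≤ A + R := by
      rw [norm_smul, hν, mul_one, Real.norm_of_nonneg (ha.trans hy.1.1)]
      exact add_le_add hy.1.2 hy.2

lemma norm_sub_inner_smul_sq (hν : ‖ν‖ = 1) (y : E) :
    ‖y - ⟪ν, y⟫ • ν‖ ^ 2 = ‖y‖ ^ 2 - ⟪ν, y⟫ ^ 2 := by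
  rw [norm_sub_sq_real, inner_smul_right, norm_smul, hν, real_inner_comm, Real.norm_eq_abs, mul_one,
    sq_abs]
  ring

lemma add_mem_flatBox (hd : ⟪ν, d⟫ = 0) (hd1 : ‖d‖ ≤ 1) (hy : y ∈ flatBox ν a A R) :
    y + d ∈ flatBox ν a A (R + 1) := by
  have hheight : ⟪ν, y + d⟫ = ⟪ν, y⟫ := by rw [inner_add_right, hd, add_zero]
  refine ⟨by simpa only [hheight] using hy.1, ?_⟩
  rw [hheight, add_sub_right_comm]
  exact (norm_add_le _ _).trans (add_le_add hy.2 hd1)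

lemma mem_flatBox_self (hν : ‖ν‖ = 1) (ha1 : a ≤ 1) (hA1 : 1 ≤ A) (hR : 0 ≤ R) :
    ν ∈ flatBox ν a A R := by
  have hνν : ⟪ν, ν⟫ = 1 := by simp [hν]
  refine ⟨by simpa only [hνν] using ⟨ha1, hA1⟩, ?_⟩
  simpa only [hνν, one_smul, sub_self, norm_zero]

lemma continuous_norm_sub_inner_smul : Continuous fun y : E => ‖y - ⟪ν, y⟫ • ν‖ := by fun_prop

lemma isCompact_flatBox [ProperSpace E] (hν : ‖ν‖ = 1) (ha : 0 ≤ a) :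
    IsCompact (flatBox ν a A R) := by
  refine (isCompact_closedBall (0 : E) (A + R)).of_isClosed_subset ?_
    fun y hy => mem_closedBall_zero_iff.2 (norm_le_of_mem_flatBox hν ha hy)
  exact (isClosed_Icc.preimage (innerSL ℝ ν).continuous).inter
    (isClosed_le continuous_norm_sub_inner_smul continuous_const)

lemma convex_flatBox : Convex ℝ (flatBox ν a A R) := by
  have hheight : IsLinearMap ℝ fun y : E => ⟪ν, y⟫ := (innerₗ E ν).isLinear
  have htan : IsLinearMap ℝ fun y : E => y - ⟪ν, y⟫ • ν :=
    (LinearMap.id - (innerₗ E ν).smulRight ν).isLinear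
  have hball := (convex_closedBall (0 : E) R).is_linear_preimage htan
  simp only [preimage, mem_closedBall_zero_iff] at hball
  exact ((convex_Icc a A).is_linear_preimage hheight).inter hball

/-- The supersolution `η + η (1 - exp (-k y_ν)) + c |y'|²` of the half space, where `y_ν` and `y'`
are the components of `y` along and orthogonal to `ν`. -/
def flatBarrier (ν : E) (η k c : ℝ) (y : E) : ℝ :=
  η * (2 - Real.exp (-(k * ⟪ν, y⟫))) + c * ‖y - ⟪ν, y⟫ • ν‖ ^ 2

lemma flatBarrier_self_le (hν : ‖ν‖ = 1) (hη : 0 ≤ η) : flatBarrier ν η k c ν ≤ 2 * η := by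
  simp only [flatBarrier, real_inner_self_eq_norm_sq, hν, one_pow, one_smul, sub_self, norm_zero]
  nlinarith [Real.exp_pos (-(k * 1))]

lemma add_le_flatBarrier (hη : 0 ≤ η) (hk : 0 ≤ k) (hy : 0 ≤ ⟪ν, y⟫) :
    η + c * ‖y - ⟪ν, y⟫ • ν‖ ^ 2 ≤ flatBarrier ν η k c y := by
  have hexp : Real.exp (-(k * ⟪ν, y⟫)) ≤ 1 :=
    Real.exp_le_one_iff.2 (neg_nonpos.2 (mul_nonneg hk hy))
  rw [flatBarrier]
  nlinarith

variable [FiniteDimensional ℝ E]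

lemma hasHessianAt_flatBarrier (hν : ‖ν‖ = 1) (η k c : ℝ) (y : E) :
    HasHessianAt (flatBarrier ν η k c)
      (fun y => (η * k * Real.exp (-(k * ⟪ν, y⟫))) • ν + (2 * c) • (y - ⟪ν, y⟫ • ν))
      ((-(η * k ^ 2 * Real.exp (-(k * ⟪ν, y⟫))) - 2 * c) • InnerProductSpace.rankOne ℝ ν ν +
        (2 * c) • ContinuousLinearMap.id ℝ E) y := by
  have hexp (z : ℝ) : HasDerivAt (fun z => Real.exp (-(k * z))) (-k * Real.exp (-(k * z))) z := by
    simpa [mul_comm] using ((hasDerivAt_id z).const_mul k).neg.exp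
  have hφ (z : ℝ) : HasDerivAt (fun z => η * (2 - Real.exp (-(k * z))) - c * z ^ 2)
      (η * k * Real.exp (-(k * z)) - 2 * c * z) z :=
    ((((hexp z).const_sub 2).const_mul η).sub ((hasDerivAt_pow 2 z).const_mul c)).congr_deriv
      (by push_cast; ring)
  have hφ' (z : ℝ) : HasDerivAt (fun z => η * k * Real.exp (-(k * z)) - 2 * c * z)
      (-(η * k ^ 2 * Real.exp (-(k * z))) - 2 * c) z :=
    (((hexp z).const_mul (η * k)).sub ((hasDerivAt_id z).const_mul (2 * c))).congr_deriv (by ring)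
  have hridge := hasHessianAt_comp_inner (x := y) 0 ν hφ (hφ' ⟪ν, y - 0⟫)
  have hsum := hridge.add ((hasHessianAt_norm_sub_sq (x := y) 0).const_mul c)
  simp only [sub_zero, smul_smul] at hsum
  convert hsum using 2 with z z
  · rw [flatBarrier, norm_sub_inner_smul_sq hν]
    ring
  · module
  · rw [mul_comm]

lemma trace_add_norm_flatBarrier_le (hν : ‖ν‖ = 1) (hη : 0 ≤ η) (hc : 0 ≤ c) (hK : 0 ≤ K)
    (hy : y ∈ flatBox ν a A R) :
    LinearMap.trace ℝ E
        ((-(η * (K + 1) ^ 2 * Real.exp (-((K + 1) * ⟪ν, y⟫))) - 2 * c) •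
            InnerProductSpace.rankOne ℝ ν ν + (2 * c) • ContinuousLinearMap.id ℝ E : E →L[ℝ] E) +
      K * ‖(η * (K + 1) * Real.exp (-((K + 1) * ⟪ν, y⟫))) • ν + (2 * c) • (y - ⟪ν, y⟫ • ν)‖ ≤
      2 * c * Module.finrank ℝ E + 2 * K * c * R - η * Real.exp (-((K + 1) * A)) := by
  set X := Real.exp (-((K + 1) * ⟪ν, y⟫))
  have htrace : LinearMap.trace ℝ E
      ((-(η * (K + 1) ^ 2 * X) - 2 * c) • InnerProductSpace.rankOne ℝ ν ν +
        (2 * c) • ContinuousLinearMap.id ℝ E : E →L[ℝ] E) =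
      -(η * (K + 1) ^ 2 * X) - 2 * c + 2 * c * Module.finrank ℝ E := by
    simp [InnerProductSpace.trace_rankOne, hν]
  have hgrad : ‖(η * (K + 1) * X) • ν + (2 * c) • (y - ⟪ν, y⟫ • ν)‖ ≤
      η * (K + 1) * X + 2 * c * R := by
    refine (norm_add_le _ _).trans (add_le_add ?_ ?_)
    · rw [norm_smul, hν, mul_one, Real.norm_of_nonneg (by positivity)]
    · rw [norm_smul, Real.norm_of_nonneg (by positivity)]
      exact mul_le_mul_of_nonneg_left hy.2 (by positivity)
  have hX : Real.exp (-((K + 1) * A)) ≤ X :=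
    Real.exp_le_exp.2 (neg_le_neg (mul_le_mul_of_nonneg_left hy.1.2 (by positivity)))
  have hηX : η * Real.exp (-((K + 1) * A)) ≤ η * X := mul_le_mul_of_nonneg_left hX hη
  have hKη : 0 ≤ K * (η * X) := by positivity
  rw [htrace]
  nlinarith [mul_le_mul_of_nonneg_left hgrad hK]

lemma le_flatBarrier_of_mem_flatBox (hν : ‖ν‖ = 1) (ha : 0 ≤ a) (hR : 0 < R) (hη : 0 ≤ η)
    (hK : 0 ≤ K) (hm : 0 ≤ m) {w : E → ℝ} {g : E → E} {B : E → E →L[ℝ] E}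
    (hw : ∀ y ∈ flatBox ν a A R, HasHessianAt w g (B y) y)
    (hineq : ∀ y ∈ flatBox ν a A R, -σ ≤ LinearMap.trace ℝ E (B y) + K * ‖g y‖)
    (hends : ∀ y ∈ flatBox ν a A R, ⟪ν, y⟫ = a ∨ ⟪ν, y⟫ = A → w y ≤ η)
    (hwm : ∀ y ∈ flatBox ν a A R, w y ≤ m)
    (hsmall : 2 * m * Module.finrank ℝ E / R ^ 2 + 2 * K * m / R + σ <
      η * Real.exp (-((K + 1) * A))) :
    ∀ y ∈ flatBox ν a A R, w y ≤ flatBarrier ν η (K + 1) (m / R ^ 2) y := by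
  set U : Set E := {y | ⟪ν, y⟫ ∈ Ioo a A ∧ ‖y - ⟪ν, y⟫ • ν‖ < R}
  have hU : IsOpen U := (isOpen_Ioo.preimage (innerSL ℝ ν).continuous).inter
    (isOpen_lt continuous_norm_sub_inner_smul continuous_const)
  have hUbox : U ⊆ flatBox ν a A R := fun y hy => ⟨Ioo_subset_Icc_self hy.1, hy.2.le⟩
  refine elliptic_comparison (isCompact_flatBox hν ha) hU hUbox (fun v => K * ‖v‖)
    (fun y hy => (hw y hy).gradient.self_of_nhds.hasFDerivAt.continuousAt.continuousWithinAt)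
    (fun y _ => (hasHessianAt_flatBarrier hν _ _ _
      y).gradient.self_of_nhds.hasFDerivAt.continuousAt.continuousWithinAt)
    (fun y hy => hw y (hUbox hy)) (fun y _ => hasHessianAt_flatBarrier hν _ _ _ y) ?_ ?_
  · intro y hy
    refine lt_of_le_of_lt (trace_add_norm_flatBarrier_le hν hη (by positivity) hK (hUbox hy))
      (lt_of_lt_of_le ?_ (hineq y (hUbox hy)))
    have hcR : 2 * K * (m / R ^ 2) * R = 2 * K * m / R := by field_simp
    have hcn : 2 * (m / R ^ 2) * Module.finrank ℝ E = 2 * m * Module.finrank ℝ E / R ^ 2 := by ring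
    linarith
  · rintro y ⟨hy, hyU⟩
    refine le_trans ?_ (add_le_flatBarrier hη (by linarith) (ha.trans hy.1.1))
    have hc : 0 ≤ m / R ^ 2 * ‖y - ⟪ν, y⟫ • ν‖ ^ 2 := by positivity
    by_cases hend : ⟪ν, y⟫ = a ∨ ⟪ν, y⟫ = A
    · linarith [hends y hy hend]
    · push Not at hend
      have hside : ‖y - ⟪ν, y⟫ • ν‖ = R := by
        refine hy.2.antisymm (not_lt.1 fun hlt => hyU ⟨⟨?_, ?_⟩, hlt⟩)
        exacts [lt_of_le_of_ne hy.1.1 hend.1.symm, lt_of_le_of_ne hy.1.2 hend.2]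
      rw [hside, div_mul_cancel₀ m (by positivity)]
      linarith [hwm y hy]

/-- The difference `v (· + d) - v` is a subsolution whose gradient enters with a Lipschitz
constant, to which the barrier applies. -/
theorem sub_le_of_flatBox (hν : ‖ν‖ = 1) (hd : ⟪ν, d⟫ = 0) (hd1 : ‖d‖ ≤ 1) (ha : 0 ≤ a)
    (ha1 : a ≤ 1) (hA1 : 1 ≤ A) (hR : 0 < R) (hη : 0 ≤ η) (hm : 0 ≤ m) {K : NNReal} {F : E → ℝ}
    {s : Set E} (hF : LipschitzOnWith K F s) {v : E → ℝ} {g : E → E} {B : E → E →L[ℝ] E}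
    {f : E → ℝ} (hv : ∀ y ∈ flatBox ν a A (R + 1), HasHessianAt v g (B y) y)
    (heq : ∀ y ∈ flatBox ν a A (R + 1), f y - LinearMap.trace ℝ E (B y) = F (g y))
    (hf : ∀ y ∈ flatBox ν a A (R + 1), |f y| ≤ σ) (hg : ∀ y ∈ flatBox ν a A (R + 1), g y ∈ s)
    (hvm : ∀ y ∈ flatBox ν a A (R + 1), |v y| ≤ m / 2)
    (hbot : ∀ y ∈ flatBox ν a A (R + 1), ⟪ν, y⟫ = a → |v y| ≤ η / 2)
    (htop : ∀ y ∈ flatBox ν a A (R + 1), ⟪ν, y⟫ = A → ‖g y‖ ≤ η)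
    (hsmall : 2 * m * Module.finrank ℝ E / R ^ 2 + 2 * K * m / R + 2 * σ <
      η * Real.exp (-((K + 1) * A))) :
    v (ν + d) - v ν ≤ 2 * η := by
  have hshift (y : E) (hy : y ∈ flatBox ν a A R) : y + d ∈ flatBox ν a A (R + 1) :=
    add_mem_flatBox hd hd1 hy
  have hsub (y : E) (hy : y ∈ flatBox ν a A R) : y ∈ flatBox ν a A (R + 1) :=
    ⟨hy.1, hy.2.trans (by linarith)⟩
  have hheight (y : E) : ⟪ν, y + d⟫ = ⟪ν, y⟫ := by rw [inner_add_right, hd, add_zero]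
  refine (le_flatBarrier_of_mem_flatBox hν ha hR hη K.2 hm (w := fun y => v (y + d) - v y)
    (g := fun y => g (y + d) - g y) (B := fun y => B (y + d) - B y) (σ := 2 * σ)
    (fun y hy => (hv _ (hshift y hy)).comp_const_add.sub (hv _ (hsub y hy))) ?_ ?_ ?_ hsmall ν
    (mem_flatBox_self hν ha1 hA1 hR.le)).trans (flatBarrier_self_le hν hη)
  · intro y hy
    have hFle := hF.norm_sub_le (hg _ (hshift y hy)) (hg _ (hsub y hy))
    rw [← heq _ (hshift y hy), ← heq _ (hsub y hy), Real.norm_eq_abs] at hFle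
    rw [ContinuousLinearMap.toLinearMap_sub, map_sub]
    have hfle := (abs_le.1 hFle).2
    have hf₁ := (abs_le.1 (hf _ (hshift y hy))).1
    have hf₂ := (abs_le.1 (hf _ (hsub y hy))).2
    change _ ≤ _ + (K : ℝ) * _
    linarith
  · rintro y hy (hbotY | htopY)
    · linarith [(abs_le.1 (hbot _ (hshift y hy) ((hheight y).trans hbotY))).2,
        (abs_le.1 (hbot _ (hsub y hy) hbotY)).1]
    · have hline (t : ℝ) (ht : t ∈ Icc (0 : ℝ) 1) : y + t • d ∈ flatBox ν a A (R + 1) := by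
        simpa using convex_flatBox.add_smul_mem (hsub y hy) (hshift y hy) ht
      refine (le_abs_self _).trans (abs_sub_le_of_inner_gradient_le
        (fun t ht => (hv _ (hline t ht)).gradient.self_of_nhds) fun t ht => ?_)
      have hgη := htop _ (hline t ht) (by
        rw [inner_add_right, inner_smul_right, hd, mul_zero, add_zero, htopY])
      exact (abs_real_inner_le_norm _ _).trans (by nlinarith [norm_nonneg (g (y + t • d))])
  · intro y hy
    linarith [(abs_le.1 (hvm _ (hshift y hy))).2, (abs_le.1 (hvm _ (hsub y hy))).1]

end FlatBox

section BoundaryDist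

variable {X : Type*} [PseudoMetricSpace X] {Ω : Set X}

/-- The distance `δ` to the boundary of `Ω`. -/
def boundaryDist (Ω : Set X) (x : X) : ℝ := infDist x (frontier Ω)

lemma continuous_boundaryDist : Continuous (boundaryDist Ω) := continuous_infDist_pt _

lemma boundaryDist_le_dist {x b : X} (hb : b ∈ frontier Ω) : boundaryDist Ω x ≤ dist x b :=
  infDist_le_dist_of_mem hb

lemma boundaryDist_le_add_dist (x y : X) : boundaryDist Ω x ≤ boundaryDist Ω y + dist x y :=
  infDist_le_infDist_add_dist

lemma half_boundaryDist_le {x y : X} (hy : y ∈ closedBall x (boundaryDist Ω x / 2)) :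
    boundaryDist Ω x / 2 ≤ boundaryDist Ω y := by
  linarith [boundaryDist_le_add_dist (Ω := Ω) x y, mem_closedBall'.1 hy]

lemma boundaryDist_le_two_mul {x y : X} (hy : y ∈ closedBall x (boundaryDist Ω x / 2)) :
    boundaryDist Ω y ≤ 2 * boundaryDist Ω x := by
  have hnonneg : 0 ≤ boundaryDist Ω x := infDist_nonneg
  linarith [boundaryDist_le_add_dist (Ω := Ω) y x, mem_closedBall.1 hy]

/-- The filter of points of `Ω` approaching its boundary, uniformly along the boundary. -/
def nearBoundary (Ω : Set X) : Filter X := comap (boundaryDist Ω) (𝓝 0) ⊓ 𝓟 Ω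

lemma eventually_mem_nearBoundary : ∀ᶠ x in nearBoundary Ω, x ∈ Ω :=
  mem_inf_of_right (mem_principal_self Ω)

lemma eventually_nearBoundary_iff {P : X → Prop} :
    (∀ᶠ x in nearBoundary Ω, P x) ↔ ∃ l > 0, ∀ x ∈ Ω, boundaryDist Ω x < l → P x := by
  rw [nearBoundary, eventually_inf_principal, ((nhds_basis_ball).comap _).eventually_iff]
  refine exists_congr fun l => and_congr_right fun _ => forall_congr' fun x => ?_
  have hnonneg : 0 ≤ boundaryDist Ω x := infDist_nonneg
  rw [mem_preimage, mem_ball_zero_iff, Real.norm_of_nonneg hnonneg]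
  exact imp.swap

end BoundaryDist

section NormalCollar

variable {E : Type*} [NormedAddCommGroup E] [InnerProductSpace ℝ E]

lemma ball_infDist_frontier_subset {s : Set E} (hs : IsOpen s) {x : E} (hx : x ∈ s) :
    ball x (infDist x (frontier s)) ⊆ s := by
  rcases (ball x (infDist x (frontier s))).eq_empty_or_nonempty with hempty | hne
  · simp only [hempty, empty_subset]
  refine (convex_ball x _).isPreconnected.subset_left_of_subset_union hs
    isClosed_closure.isOpen_compl (disjoint_compl_right.mono_left subset_closure) ?_
    ⟨x, mem_ball_self (nonempty_ball.1 hne), hx⟩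
  intro y hy
  by_contra! hys
  have hyfr : y ∈ frontier s := by
    rw [hs.frontier_eq]
    exact ⟨not_not.1 fun h => hys (Or.inr h), fun h => hys (Or.inl h)⟩
  exact (mem_ball'.1 hy).not_ge (infDist_le_dist_of_mem hyfr)

lemma infDist_smul_gradient_eq_sub [CompleteSpace E] {s : Set E} {g x b : E} (hb : b ∈ s)
    (hd : dist x b = infDist x s) (hg : HasGradientAt (infDist · s) g x) :
    infDist x s • g = x - b := by
  have hline (r : ℝ) (hr : r ∈ Icc (0 : ℝ) 1) :
      infDist (x + r • (b - x)) s = infDist x s - r * infDist x s := by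
    have hlower := infDist_le_infDist_add_dist (s := s) (x := x) (y := x + r • (b - x))
    have hupper := infDist_le_dist_of_mem (x := x + r • (b - x)) hb
    rw [dist_self_add_right, norm_smul, Real.norm_of_nonneg hr.1, ← dist_eq_norm', hd] at hlower
    rw [dist_eq_norm, show x + r • (b - x) - b = (1 - r) • (x - b) by module, norm_smul,
      Real.norm_of_nonneg (sub_nonneg.2 hr.2), ← dist_eq_norm, hd] at hupper
    exact le_antisymm (by linarith) (by linarith)
  have hderiv : HasDerivWithinAt (fun r : ℝ => infDist x s - r * infDist x s)
      (-infDist x s) (Icc 0 1) 0 := by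
    simpa using (((hasDerivAt_id (0 : ℝ)).mul_const (infDist x s)).const_sub
      (infDist x s)).hasDerivWithinAt
  have hinner : ⟪g, b - x⟫ = -infDist x s := by
    have hcomp : HasDerivAt (fun r : ℝ => infDist (x + r • (b - x)) s) ⟪g, b - x⟫ 0 :=
      hasDerivAt_comp_line (f := (infDist · s)) (by simpa using hg)
    exact (uniqueDiffOn_Icc one_pos 0 (by simp)).eq_deriv _ hcomp.hasDerivWithinAt
      (hderiv.congr hline (hline 0 (by simp)))
  have hnorm : ‖g‖ ≤ 1 := by
    simpa using hg.hasFDerivAt.le_of_lipschitz (lipschitz_infDist_pt s)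
  have hsq : ‖infDist x s • g - (x - b)‖ ^ 2 = infDist x s ^ 2 * (‖g‖ ^ 2 - 1) := by
    rw [norm_sub_sq_real, ← dist_eq_norm, hd, norm_smul, Real.norm_eq_abs, mul_pow, sq_abs,
      ← neg_sub b x, inner_neg_right, inner_smul_left, hinner]
    simp only [conj_trivial]
    ring
  have hle : infDist x s ^ 2 * (‖g‖ ^ 2 - 1) ≤ 0 :=
    mul_nonpos_of_nonneg_of_nonpos (sq_nonneg _) (by nlinarith [norm_nonneg g])
  exact sub_eq_zero.1 (norm_eq_zero.1 (pow_eq_zero_iff two_ne_zero |>.1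
    ((hsq.le.trans hle).antisymm (sq_nonneg _))))

variable {Ω : Set E} {δ₀ : ℝ} {ν : E → E}

/-- The bounded open set `Ω` has an inner collar of width `δ₀` swept out by the segments normal to
its boundary: `ν` is the inward unit normal on `frontier Ω`, extended to the collar so as to be
constant along these segments, and the distance to the boundary is differentiable in the collar,
with gradient `ν`. -/
structure IsNormalCollar [CompleteSpace E] (Ω : Set E) (δ₀ : ℝ) (ν : E → E) : Prop where
  isOpen : IsOpen Ω
  isBounded : Bornology.IsBounded Ω
  width_pos : 0 < δ₀
  norm_normal : ∀ b ∈ frontier Ω, ‖ν b‖ = 1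
  inward : ∀ b ∈ frontier Ω, ∀ s ∈ Ioo 0 δ₀, b + s • ν b ∈ Ω ∧ boundaryDist Ω (b + s • ν b) = s
  exists_foot : ∀ x ∈ Ω, boundaryDist Ω x < δ₀ →
    ∃ b ∈ frontier Ω, dist x b = boundaryDist Ω x ∧ ν x = ν b
  hasGradientAt : ∀ x ∈ Ω, boundaryDist Ω x < δ₀ → HasGradientAt (boundaryDist Ω) (ν x) x

namespace IsNormalCollar

variable [CompleteSpace E] (h : IsNormalCollar Ω δ₀ ν)
include h

lemma boundaryDist_pos {x : E} (hx : x ∈ Ω) : 0 < boundaryDist Ω x := by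
  by_contra! hle
  have hzero : boundaryDist Ω x = 0 := hle.antisymm infDist_nonneg
  obtain ⟨b, hb, hd, -⟩ := h.exists_foot x hx (hzero.trans_lt h.width_pos)
  have hxb : x = b := dist_eq_zero.1 (hd.trans hzero)
  exact (disjoint_frontier_iff_isOpen.2 h.isOpen).notMem_of_mem_left hb (hxb ▸ hx)

lemma mem_of_mem_closedBall_half {x y : E} (hx : x ∈ Ω)
    (hy : y ∈ closedBall x (boundaryDist Ω x / 2)) : y ∈ Ω :=
  ball_infDist_frontier_subset h.isOpen hx
    (closedBall_subset_ball (half_lt_self (h.boundaryDist_pos hx)) hy)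

lemma mem_of_mem_closure {x : E} (hx : x ∈ closure Ω) (hpos : 0 < boundaryDist Ω x) : x ∈ Ω := by
  by_contra hxΩ
  have hfr : x ∈ frontier Ω := by
    rw [h.isOpen.frontier_eq]
    exact ⟨hx, hxΩ⟩
  exact hpos.ne' (infDist_zero_of_mem hfr)

lemma normal_eq_of_dist_eq {x b : E} (hx : x ∈ Ω) (hδ : boundaryDist Ω x < δ₀)
    (hb : b ∈ frontier Ω) (hd : dist x b = boundaryDist Ω x) :
    ν x = ν b ∧ x = b + boundaryDist Ω x • ν x := by
  obtain ⟨b', hb', hd', hν⟩ := h.exists_foot x hx hδ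
  have hgrad := h.hasGradientAt x hx hδ
  have hrepr : boundaryDist Ω x • ν x = x - b := infDist_smul_gradient_eq_sub hb hd hgrad
  have hrepr' : boundaryDist Ω x • ν x = x - b' := infDist_smul_gradient_eq_sub hb' hd' hgrad
  have hbb' : b' = b := sub_right_injective (hrepr'.symm.trans hrepr)
  exact ⟨hbb' ▸ hν, by rw [hrepr, add_sub_cancel]⟩

lemma norm_normal_of_mem {x : E} (hx : x ∈ Ω) (hδ : boundaryDist Ω x < δ₀) : ‖ν x‖ = 1 := by
  obtain ⟨b, hb, -, hν⟩ := h.exists_foot x hx hδ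
  rw [hν, h.norm_normal b hb]

lemma eq_normal_of_boundaryDist_eq {b μ : E} (hb : b ∈ frontier Ω) (hμ : ‖μ‖ = 1)
    (hmem : b + (δ₀ / 2) • μ ∈ closure Ω) (hd : boundaryDist Ω (b + (δ₀ / 2) • μ) = δ₀ / 2) :
    μ = ν b := by
  have hδ₀ := half_pos h.width_pos
  obtain ⟨hν, hrepr⟩ := h.normal_eq_of_dist_eq (h.mem_of_mem_closure hmem (hδ₀.trans_eq hd.symm))
    (hd.trans_lt (half_lt_self h.width_pos)) hb
    (by rw [dist_self_add_left, norm_smul, hμ, mul_one, Real.norm_of_nonneg hδ₀.le, hd])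
  rw [hν, hd] at hrepr
  exact smul_right_injective E hδ₀.ne' (add_left_cancel hrepr)

/-- Closedness of the relation characterizing the normal, combined with compactness of the unit
sphere. -/
lemma continuousOn_normal [ProperSpace E] : ContinuousOn ν (frontier Ω) := by
  intro b hb
  refine (isCompact_sphere (0 : E) 1).tendsto_nhds_of_unique_mapClusterPt
    (eventually_mem_nhdsWithin.mono fun b' hb' => mem_sphere_zero_iff_norm.2 (h.norm_normal b' hb'))
    fun μ hμ hcluster => ?_
  obtain ⟨U, hU, hlim⟩ := mapClusterPt_iff_ultrafilter.1 hcluster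
  have hshift : Tendsto (fun b' => b' + (δ₀ / 2) • ν b') U (𝓝 (b + (δ₀ / 2) • μ)) :=
    (tendsto_id'.2 (hU.trans nhdsWithin_le_nhds)).add (hlim.const_smul _)
  have hinward : ∀ᶠ b' in U, b' + (δ₀ / 2) • ν b' ∈ Ω ∧
      boundaryDist Ω (b' + (δ₀ / 2) • ν b') = δ₀ / 2 :=
    (eventually_mem_nhdsWithin.filter_mono hU).mono fun b' hb' =>
      h.inward b' hb' _ ⟨half_pos h.width_pos, half_lt_self h.width_pos⟩
  refine h.eq_normal_of_boundaryDist_eq hb (mem_sphere_zero_iff_norm.1 hμ)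
    (isClosed_closure.mem_of_tendsto hshift (hinward.mono fun b' hb' => subset_closure hb'.1)) ?_
  exact tendsto_nhds_unique ((continuous_boundaryDist.tendsto _).comp hshift)
    (tendsto_const_nhds.congr' (hinward.mono fun b' hb' => hb'.2.symm))

lemma exists_norm_normal_sub_lt [ProperSpace E] {κ : ℝ} (hκ : 0 < κ) :
    ∃ ρ > 0, ∀ b ∈ frontier Ω, ∀ x ∈ Ω, boundaryDist Ω x < δ₀ → dist x b < ρ →
      ‖ν x - ν b‖ < κ := by
  have hcompact : IsCompact (frontier Ω) := isCompact_of_isClosed_isBounded isClosed_frontier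
    (h.isBounded.closure.subset frontier_subset_closure)
  obtain ⟨ρ, hρ, hclose⟩ := Metric.uniformContinuousOn_iff.1
    (hcompact.uniformContinuousOn_of_continuous h.continuousOn_normal) κ hκ
  refine ⟨ρ / 2, half_pos hρ, fun b hb x hx hδ hxb => ?_⟩
  obtain ⟨b', hb', hd, hν⟩ := h.exists_foot x hx hδ
  rw [hν, ← dist_eq_norm]
  refine hclose b' hb' b hb ?_
  calc dist b' b ≤ dist x b' + dist x b := dist_triangle_left _ _ _
    _ ≤ dist x b + dist x b := by
      rw [hd]
      exact add_le_add_left (boundaryDist_le_dist hb) _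
    _ < ρ := by linarith

lemma add_mem_of_norm_sq_lt {b z : E} (hb : b ∈ frontier Ω) (hz : ‖z‖ ^ 2 < δ₀ * ⟪ν b, z⟫) :
    b + z ∈ Ω := by
  obtain ⟨hcenter, hradius⟩ :=
    h.inward b hb (δ₀ / 2) ⟨half_pos h.width_pos, half_lt_self h.width_pos⟩
  refine ball_infDist_frontier_subset h.isOpen hcenter (mem_ball.2 ?_)
  change _ < boundaryDist Ω _
  rw [hradius, dist_add_left, dist_eq_norm]
  refine lt_of_pow_lt_pow_left₀ 2 (half_pos h.width_pos).le ?_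
  rw [norm_sub_sq_real, inner_smul_right, norm_smul, h.norm_normal b hb, real_inner_comm,
    Real.norm_of_nonneg (half_pos h.width_pos).le]
  nlinarith

lemma add_smul_mem_of_mem_flatBox {a A R l : ℝ} (ha : 0 ≤ a) {b y : E}
    (hb : b ∈ frontier Ω) (hl : 0 < l) (hlS : l * (A + R) ^ 2 < a * δ₀)
    (hy : y ∈ flatBox (ν b) a A R) : b + l • y ∈ Ω := by
  refine h.add_mem_of_norm_sq_lt hb ?_
  have hnorm := norm_le_of_mem_flatBox (h.norm_normal b hb) ha hy
  calc ‖l • y‖ ^ 2 ≤ l * (l * (A + R) ^ 2) := by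
        rw [norm_smul, Real.norm_of_nonneg hl.le, mul_pow, sq, mul_assoc]
        gcongr
    _ < l * (a * δ₀) := mul_lt_mul_of_pos_left hlS hl
    _ ≤ δ₀ * ⟪ν b, l • y⟫ := by
      rw [inner_smul_right]
      nlinarith [mul_le_mul_of_nonneg_left hy.1.1 (mul_pos hl h.width_pos).le]

lemma abs_boundaryDist_sub_le {s : Set E} (hs : Convex ℝ s) {b y : E} {κ l : ℝ}
    (hb : b ∈ frontier Ω) (hl : l ∈ Ioo 0 δ₀) (hνs : ν b ∈ s) (hys : y ∈ s)
    (hmem : ∀ z ∈ s, b + l • z ∈ Ω ∧ boundaryDist Ω (b + l • z) < δ₀)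
    (hκ : ∀ z ∈ s, ‖ν (b + l • z) - ν b‖ ≤ κ) :
    |boundaryDist Ω (b + l • y) - l * ⟪ν b, y⟫| ≤ κ * (l * ‖y - ν b‖) := by
  have hline (r : ℝ) (hr : r ∈ Icc (0 : ℝ) 1) : ∃ z ∈ s,
      b + l • ν b + r • (l • (y - ν b)) = b + l • z :=
    ⟨_, hs.add_smul_sub_mem hνs hys hr, by module⟩
  have hgrad (r : ℝ) (hr : r ∈ Icc (0 : ℝ) 1) :
      HasGradientAt (fun x => boundaryDist Ω x - ⟪ν b, x⟫)
        (ν (b + l • ν b + r • (l • (y - ν b))) - ν b) (b + l • ν b + r • (l • (y - ν b))) := by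
    obtain ⟨z, hz, hz_eq⟩ := hline r hr
    rw [hz_eq]
    have hδ := h.hasGradientAt _ (hmem z hz).1 (hmem z hz).2
    exact (hδ.hasFDerivAt.sub (innerSL ℝ (ν b)).hasFDerivAt).congr_fderiv (map_sub _ _ _).symm
  have hmv := abs_sub_le_of_inner_gradient_le
    (g := fun x => ν x - ν b) (C := κ * (l * ‖y - ν b‖)) hgrad fun r hr => by
    obtain ⟨z, hz, hz_eq⟩ := hline r hr
    rw [hz_eq]
    refine (abs_real_inner_le_norm _ _).trans ?_
    rw [norm_smul, Real.norm_of_nonneg hl.1.le]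
    exact mul_le_mul_of_nonneg_right (hκ z hz) (mul_nonneg hl.1.le (norm_nonneg _))
  convert hmv using 2
  rw [(h.inward b hb l hl).2, show b + l • ν b + l • (y - ν b) = b + l • y by module]
  simp only [inner_add_right, inner_smul_right, real_inner_self_eq_norm_sq, h.norm_normal b hb]
  ring

/-- At small scales the boundary is flat: in a box based at a boundary point `b`, rescaled by `l`,
the distance to the boundary is comparable to the distance to the tangent hyperplane at `b`. -/
lemma eventually_abs_boundaryDist_sub_le [ProperSpace E] {a A R : ℝ} (ha : 0 < a) (ha1 : a ≤ 1)
    (hA1 : 1 ≤ A) (hR : 0 ≤ R) :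
    ∀ᶠ l in 𝓝[>] (0 : ℝ), ∀ b ∈ frontier Ω, ∀ y ∈ flatBox (ν b) a A R,
      (b + l • y ∈ Ω ∧ boundaryDist Ω (b + l • y) < δ₀) ∧
        |boundaryDist Ω (b + l • y) - l * ⟪ν b, y⟫| ≤ l * ⟪ν b, y⟫ / 2 := by
  have hδ₀ := h.width_pos
  have hS : 1 ≤ A + R := by linarith
  obtain ⟨ρ, hρ, hclose⟩ := h.exists_norm_normal_sub_lt (κ := a / (4 * (A + R))) (by positivity)
  have hlim (c : ℝ) : Tendsto (fun l : ℝ => l * c) (𝓝[>] 0) (𝓝 0) :=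
    ((continuous_mul_const c).tendsto' 0 0 (zero_mul c)).mono_left nhdsWithin_le_nhds
  filter_upwards [self_mem_nhdsWithin,
    (hlim ((A + R) ^ 2)).eventually_lt_const (by positivity : 0 < a * δ₀),
    (hlim (A + R)).eventually_lt_const hδ₀, (hlim (A + R)).eventually_lt_const hρ]
    with l (hl : 0 < l) hmemS hδS hρS b hb y hy
  have hν := h.norm_normal b hb
  have hmem (z : E) (hz : z ∈ flatBox (ν b) a A R) : b + l • z ∈ Ω :=
    h.add_smul_mem_of_mem_flatBox ha.le hb hl hmemS hz
  have hdist (z : E) (hz : z ∈ flatBox (ν b) a A R) : dist (b + l • z) b ≤ l * (A + R) := by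
    rw [dist_self_add_left, norm_smul, Real.norm_of_nonneg hl.le]
    exact mul_le_mul_of_nonneg_left (norm_le_of_mem_flatBox hν ha.le hz) hl.le
  have hcollar (z : E) (hz : z ∈ flatBox (ν b) a A R) : boundaryDist Ω (b + l • z) < δ₀ :=
    (boundaryDist_le_dist hb).trans_lt ((hdist z hz).trans_lt hδS)
  refine ⟨⟨hmem y hy, hcollar y hy⟩, (h.abs_boundaryDist_sub_le convex_flatBox hb
    ⟨hl, lt_of_le_of_lt (le_mul_of_one_le_right hl.le hS) hδS⟩
    (mem_flatBox_self hν ha1 hA1 hR) hy (fun z hz => ⟨hmem z hz, hcollar z hz⟩) fun z hz =>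
      (hclose b hb _ (hmem z hz) (hcollar z hz) ((hdist z hz).trans_lt hρS)).le).trans ?_⟩
  have hyν : ‖y - ν b‖ ≤ 2 * (A + R) := (norm_sub_le _ _).trans
    (by linarith [norm_le_of_mem_flatBox hν ha.le hy])
  calc a / (4 * (A + R)) * (l * ‖y - ν b‖) ≤ a / (4 * (A + R)) * (l * (2 * (A + R))) := by gcongr
    _ = l * a / 2 := by field_simp; ring
    _ ≤ l * ⟪ν b, y⟫ / 2 := by
      gcongr
      exact hy.1.1

lemma tendsto_boundaryDist_nearBoundary :
    Tendsto (boundaryDist Ω) (nearBoundary Ω) (𝓝[>] 0) :=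
  tendsto_nhdsWithin_iff.2 ⟨tendsto_comap.mono_left inf_le_left,
    eventually_mem_nearBoundary.mono fun _ => h.boundaryDist_pos⟩

lemma eventually_lt_nearBoundary {c : ℝ} (hc : 0 < c) :
    ∀ᶠ x in nearBoundary Ω, boundaryDist Ω x < c :=
  (h.tendsto_boundaryDist_nearBoundary.mono_right nhdsWithin_le_nhds).eventually_lt_const hc

lemma eventually_forall_closedBall_half {P : E → Prop} (hP : ∀ᶠ x in nearBoundary Ω, P x) :
    ∀ᶠ x in nearBoundary Ω, ∀ y ∈ closedBall x (boundaryDist Ω x / 2), P y := by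
  obtain ⟨l, hl, hP⟩ := eventually_nearBoundary_iff.1 hP
  filter_upwards [eventually_mem_nearBoundary, h.eventually_lt_nearBoundary (half_pos hl)]
    with x hx hxl y hy
  exact hP y (h.mem_of_mem_closedBall_half hx hy) (by linarith [boundaryDist_le_two_mul hy])

lemma eventually_norm_normal_sub_lt [ProperSpace E] {κ : ℝ} (hκ : 0 < κ) :
    ∀ᶠ x in nearBoundary Ω, ∀ y ∈ closedBall x (boundaryDist Ω x / 2), ‖ν y - ν x‖ < κ := by
  obtain ⟨ρ, hρ, hclose⟩ := h.exists_norm_normal_sub_lt hκ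
  filter_upwards [eventually_mem_nearBoundary, h.eventually_lt_nearBoundary (half_pos h.width_pos),
    h.eventually_lt_nearBoundary (half_pos hρ)] with x hx hxδ hxρ y hy
  obtain ⟨b, hb, hd, hν⟩ := h.exists_foot x hx (by linarith [h.width_pos])
  rw [hν]
  refine hclose b hb y (h.mem_of_mem_closedBall_half hx hy)
    (by linarith [boundaryDist_le_two_mul hy]) ?_
  linarith [dist_triangle y x b, mem_closedBall.1 hy, h.boundaryDist_pos hx]

end IsNormalCollar

end NormalCollar

section BernsteinSolution

variable {E : Type*} [NormedAddCommGroup E] [InnerProductSpace ℝ E] [FiniteDimensional ℝ E]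
  {p β δ₀ T K Γ M : ℝ} {Ω : Set E} {ν : E → E} {u : E → ℝ → ℝ} {G : E → ℝ → E}
  {H : E → ℝ → E →L[ℝ] E} {u' : E → ℝ → ℝ}

/-- `u` is a classical solution of the Dirichlet problem `u_t - Δu = |∇u|^p` in `Ω`, `u = 0` on the
boundary, up to the time `T`. It obeys the Bernstein estimate `|∇u| ≤ K δ^(-β)`, its gradient is
bounded by `Γ` on `[T/4, T/2]`, well before `T`, and its time derivative by `M` on `[T/2, T]`. -/
structure IsBernsteinSolution (p β δ₀ T K Γ M : ℝ) (Ω : Set E) (ν : E → E) (u : E → ℝ → ℝ)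
    (G : E → ℝ → E) (H : E → ℝ → E →L[ℝ] E) (u' : E → ℝ → ℝ) : Prop where
  collar : IsNormalCollar Ω δ₀ ν
  two_lt : 2 < p
  exponent_eq : β = 1 / (p - 1)
  time_pos : 0 < T
  solution : IsHamiltonJacobiOn (fun v => ‖v‖ ^ p) u G H u' (Ω ×ˢ Ioc 0 T)
  continuousOn_closure : ∀ t ∈ Ioc 0 T, ContinuousOn (u · t) (closure Ω)
  eq_zero : ∀ b ∈ frontier Ω, ∀ t ∈ Ioc 0 T, u b t = 0
  const_pos : 0 < K
  norm_gradient_le : ∀ x ∈ Ω, ∀ t ∈ Ioc 0 T, ‖G x t‖ ≤ K * boundaryDist Ω x ^ (-β)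
  norm_gradient_le_early : ∀ x ∈ Ω, ∀ t ∈ Icc (T / 4) (T / 2), ‖G x t‖ ≤ Γ
  abs_time_deriv_le : ∀ x ∈ Ω, ∀ t ∈ Icc (T / 2) T, |u' x t| ≤ M

namespace IsBernsteinSolution

variable (h : IsBernsteinSolution p β δ₀ T K Γ M Ω ν u G H u')
include h

lemma exponent_mul_sub_one : β * (p - 1) = 1 := by
  rw [h.exponent_eq, one_div_mul_cancel (by linarith [h.two_lt])]

lemma exponent_pos : 0 < β := by
  rw [h.exponent_eq]
  exact one_div_pos.2 (by linarith [h.two_lt])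

lemma exponent_lt_one : β < 1 := by
  nlinarith [h.exponent_mul_sub_one, h.exponent_pos, h.two_lt]

lemma exponent_mul : β * p = β + 1 := by
  linarith [h.exponent_mul_sub_one]

lemma rpow_neg_exponent_mul {d : ℝ} (hd : 0 < d) : d ^ (-(β * p)) = d ^ (-β) / d := by
  rw [h.exponent_mul, neg_add', Real.rpow_sub_one hd.ne']

lemma norm_gradient_le_two_mul {y : E} {d t : ℝ} (hy : y ∈ Ω) (ht : t ∈ Ioc 0 T) (hd : 0 < d)
    (hdy : d / 2 ≤ boundaryDist Ω y) : ‖G y t‖ ≤ 2 * K * d ^ (-β) :=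
  calc ‖G y t‖ ≤ K * boundaryDist Ω y ^ (-β) := h.norm_gradient_le y hy t ht
    _ ≤ K * (2 * d ^ (-β)) := mul_le_mul_of_nonneg_left
        (rpow_neg_le_two_mul_rpow_neg h.exponent_pos.le h.exponent_lt_one.le hd hdy) h.const_pos.le
    _ = 2 * K * d ^ (-β) := by ring

/-- The Bernstein estimate is integrated along the normal from the boundary, where `u` vanishes. -/
lemma abs_le_rpow {x : E} {t : ℝ} (hx : x ∈ Ω) (hδ : boundaryDist Ω x < δ₀) (ht : t ∈ Ioc 0 T) :
    |u x t| ≤ K / (1 - β) * boundaryDist Ω x ^ (1 - β) := by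
  obtain ⟨b, hb, hd, -⟩ := h.collar.exists_foot x hx hδ
  obtain ⟨hν, hxb⟩ := h.collar.normal_eq_of_dist_eq hx hδ hb hd
  rw [hν] at hxb
  set d := boundaryDist Ω x
  have hd0 : 0 < d := h.collar.boundaryDist_pos hx
  have hin (s : ℝ) (hs : s ∈ Ioo 0 d) :
      b + s • ν b ∈ Ω ∧ boundaryDist Ω (b + s • ν b) = s :=
    h.collar.inward b hb s ⟨hs.1, hs.2.trans hδ⟩
  have hray : MapsTo (fun s : ℝ => b + s • ν b) (Icc 0 d) (closure Ω) := by
    intro s hs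
    rcases hs.1.eq_or_lt with rfl | hpos
    · simpa using frontier_subset_closure hb
    · exact subset_closure (h.collar.inward b hb s ⟨hpos, hs.2.trans_lt hδ⟩).1
  rw [hxb]
  refine abs_le_of_abs_deriv_le_rpow (f := fun s => u (b + s • ν b) t) h.exponent_lt_one hd0.le
    ((h.continuousOn_closure t ht).comp (Continuous.continuousOn (by fun_prop)) hray) ?_
    (fun s hs => hasDerivAt_comp_line (f := (u · t))
      (h.solution.hasParabolicDerivAt (_, t) ⟨(hin s hs).1, ht⟩).hessian.gradient.self_of_nhds)
    fun s hs => ?_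
  · simpa using h.eq_zero b hb t ht
  · refine (abs_real_inner_le_norm _ _).trans ?_
    rw [h.collar.norm_normal b hb, mul_one]
    simpa only [(hin s hs).2] using h.norm_gradient_le _ (hin s hs).1 t ht

/-- On the cylinder of radius `δ / 2` the nonlinearity has Lipschitz constant of order `1 / δ`, so
that all terms of the equation scale alike. -/
lemma exists_norm_hessian_apply_le :
    ∃ C > 0, ∀ᶠ x in nearBoundary Ω, ∀ t ∈ Icc (T / 2) T, ∀ (k : E) (m : ℝ),
      (∀ y ∈ closedBall x (boundaryDist Ω x / 2), ∀ s ∈ Icc (T / 4) T, |⟪G y s, k⟫| ≤ m) →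
      ‖H x t k‖ ≤ C * (m / boundaryDist Ω x) := by
  have hT := h.time_pos
  have hK := h.const_pos
  have hp := h.two_lt
  refine ⟨16 * (2 * Module.finrank ℝ E + 1) * (1 + p * (2 * K) ^ (p - 1) / 2), by positivity, ?_⟩
  filter_upwards [eventually_mem_nearBoundary,
    h.collar.eventually_lt_nearBoundary (Real.sqrt_pos.2 hT)] with x hx hxT t ht k m hm
  set d := boundaryDist Ω x
  have hd : 0 < d := h.collar.boundaryDist_pos hx
  rw [Real.lt_sqrt hd.le] at hxT
  have hcyl : parabolicCylinder x t (d / 2) ⊆ closedBall x (d / 2) ×ˢ Icc (T / 4) T :=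
    prod_mono_right (Icc_subset_Icc (by nlinarith [ht.1]) ht.2)
  have hdomain : parabolicCylinder x t (d / 2) ⊆ Ω ×ˢ Ioc 0 T := fun q hq =>
    ⟨h.collar.mem_of_mem_closedBall_half hx (hcyl hq).1, by linarith [(hcyl hq).2.1],
      (hcyl hq).2.2⟩
  have hhess := (h.solution.mono hdomain).norm_hessian_apply_le (half_pos hd)
    (lipschitzOnWith_norm_rpow E (by linarith : 1 ≤ p) (2 * K * d ^ (-β)))
    (fun q hq => mem_closedBall_zero_iff.2 (h.norm_gradient_le_two_mul (hdomain hq).1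
      (hdomain hq).2 hd (half_boundaryDist_le (hcyl hq).1)))
    (fun q hq => hm q.1 (hcyl hq).1 q.2 (hcyl hq).2)
  have hlip : p * (2 * K * d ^ (-β)) ^ (p - 1) * (d / 2) = p * (2 * K) ^ (p - 1) / 2 := by
    rw [Real.mul_rpow (by positivity) (by positivity), ← Real.rpow_mul hd.le, neg_mul,
      h.exponent_mul_sub_one, Real.rpow_neg_one]
    field_simp
  rw [Real.coe_toNNReal _ (by have := Real.rpow_nonneg hd.le (-β); positivity), hlip] at hhess
  refine hhess.trans_eq ?_
  field_simp
  ring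

lemma exists_norm_hessian_apply_le_rpow :
    ∃ C > 0, ∀ᶠ x in nearBoundary Ω, ∀ y ∈ closedBall x (boundaryDist Ω x / 2),
      ∀ t ∈ Icc (T / 2) T, ∀ k : E,
        ‖H y t k‖ ≤ C * (boundaryDist Ω x ^ (-β) / boundaryDist Ω x) * ‖k‖ := by
  obtain ⟨C, hC, hhess⟩ := h.exists_norm_hessian_apply_le
  have hK := h.const_pos
  refine ⟨8 * C * K, by positivity, ?_⟩
  filter_upwards [eventually_mem_nearBoundary, h.collar.eventually_forall_closedBall_half hhess]
    with x hx hhess y hy t ht k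
  have hyΩ := h.collar.mem_of_mem_closedBall_half hx hy
  have hdx := h.collar.boundaryDist_pos hx
  have hdy := h.collar.boundaryDist_pos hyΩ
  have hm : ∀ z ∈ closedBall y (boundaryDist Ω y / 2), ∀ s ∈ Icc (T / 4) T,
      |⟪G z s, k⟫| ≤ 4 * K * boundaryDist Ω x ^ (-β) * ‖k‖ := fun z hz s hs => by
    refine (abs_real_inner_le_norm _ _).trans (mul_le_mul_of_nonneg_right ?_ (norm_nonneg k))
    calc ‖G z s‖ ≤ 2 * K * boundaryDist Ω y ^ (-β) :=
          h.norm_gradient_le_two_mul (h.collar.mem_of_mem_closedBall_half hyΩ hz)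
            ⟨by linarith [h.time_pos, hs.1], hs.2⟩ hdy (half_boundaryDist_le hz)
      _ ≤ 2 * K * (2 * boundaryDist Ω x ^ (-β)) := by
          gcongr
          exact rpow_neg_le_two_mul_rpow_neg h.exponent_pos.le h.exponent_lt_one.le hdx
            (half_boundaryDist_le hy)
      _ = 4 * K * boundaryDist Ω x ^ (-β) := by ring
  calc ‖H y t k‖ ≤ C * (4 * K * boundaryDist Ω x ^ (-β) * ‖k‖ / boundaryDist Ω y) :=
        hhess y hy t ht k _ hm
    _ ≤ C * (4 * K * boundaryDist Ω x ^ (-β) * ‖k‖ / (boundaryDist Ω x / 2)) := by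
        gcongr
        exact half_boundaryDist_le hy
    _ = 8 * C * K * (boundaryDist Ω x ^ (-β) / boundaryDist Ω x) * ‖k‖ := by
        field_simp
        ring

lemma rpow_sub_one_mul_self_rpow {l : ℝ} (hl : 0 < l) :
    (l ^ (β - 1) * l) ^ p = l ^ (β - 1) * l ^ 2 := by
  rw [← Real.rpow_add_one hl.ne', sub_add_cancel, ← Real.rpow_mul hl.le, h.exponent_mul,
    ← Real.rpow_natCast l 2, ← Real.rpow_add hl]
  congr 1
  push_cast
  ring

lemma rpow_sub_one_mul_sq_le {l : ℝ} (hl : l ∈ Ioc 0 1) : l ^ (β - 1) * l ^ 2 ≤ l :=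
  calc l ^ (β - 1) * l ^ 2 = l ^ β * l := by
        rw [sq, ← mul_assoc, ← Real.rpow_add_one hl.1.ne', sub_add_cancel]
    _ ≤ l := mul_le_of_le_one_left hl.1.le (Real.rpow_le_one hl.1.le hl.2 h.exponent_pos.le)

lemma norm_rescaled_gradient_le {x : E} {l z t : ℝ} (hx : x ∈ Ω) (ht : t ∈ Ioc 0 T) (hl : 0 < l)
    (hz : 0 < z) (hδ : |boundaryDist Ω x - l * z| ≤ l * z / 2) :
    ‖(l ^ (β - 1) * l) • G x t‖ ≤ 2 * K * z ^ (-β) := by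
  rw [norm_smul, Real.norm_of_nonneg (by positivity), ← Real.rpow_add_one hl.ne', sub_add_cancel]
  calc l ^ β * ‖G x t‖ ≤ l ^ β * (2 * K * (l * z) ^ (-β)) := by
        gcongr
        exact h.norm_gradient_le_two_mul hx ht (by positivity) (by linarith [(abs_le.1 hδ).1])
    _ = 2 * K * z ^ (-β) := by
        rw [Real.mul_rpow hl.le hz.le, Real.rpow_neg hl.le]
        field_simp

lemma abs_rescaled_le {x : E} {l z t : ℝ} (hx : x ∈ Ω) (hxδ : boundaryDist Ω x < δ₀)
    (ht : t ∈ Ioc 0 T) (hl : 0 < l) (hz : 0 < z) (hδ : |boundaryDist Ω x - l * z| ≤ l * z / 2) :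
    |l ^ (β - 1) * u x t| ≤ 2 * (K / (1 - β)) * z ^ (1 - β) := by
  have hβ0 := h.exponent_pos
  have hβ1 : 0 < 1 - β := sub_pos.2 h.exponent_lt_one
  have hK := h.const_pos
  rw [abs_mul, abs_of_nonneg (by positivity)]
  calc l ^ (β - 1) * |u x t|
      ≤ l ^ (β - 1) * (K / (1 - β) * (2 * (l * z) ^ (1 - β))) := by
        gcongr
        refine (h.abs_le_rpow hx hxδ ht).trans ?_
        gcongr
        exact rpow_le_two_mul_rpow hβ1.le (by linarith) (by positivity)
          (h.collar.boundaryDist_pos hx).le (by nlinarith [(abs_le.1 hδ).2])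
    _ = 2 * (K / (1 - β)) * z ^ (1 - β) := by
        rw [Real.mul_rpow hl.le hz.le, ← neg_sub 1 β, Real.rpow_neg hl.le]
        field_simp

/-- Blow-up at a boundary point `b`: the rescaled function `l ^ (β - 1) * u (b + l • ·)` solves the
same equation up to an error `l * M`, in a domain which is nearly a half-space. -/
lemma sub_le_of_blowup {b d : E} {a A R l η m t : ℝ} {Λ : NNReal} (hb : b ∈ frontier Ω)
    (hd : ⟪ν b, d⟫ = 0) (hd1 : ‖d‖ ≤ 1) (ha : 0 < a) (ha1 : a ≤ 1) (hA1 : 1 ≤ A) (hR : 0 < R)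
    (hη : 0 ≤ η) (hl : l ∈ Ioc 0 1) (ht : t ∈ Icc (T / 2) T)
    (hbox : ∀ y ∈ flatBox (ν b) a A (R + 1),
      (b + l • y ∈ Ω ∧ boundaryDist Ω (b + l • y) < δ₀) ∧
        |boundaryDist Ω (b + l • y) - l * ⟪ν b, y⟫| ≤ l * ⟪ν b, y⟫ / 2)
    (hΛ : LipschitzOnWith Λ (fun v : E => ‖v‖ ^ p) (closedBall 0 (2 * K * a ^ (-β))))
    (hm : 2 * (K / (1 - β)) * A ^ (1 - β) ≤ m / 2)
    (hbot : 2 * (K / (1 - β)) * a ^ (1 - β) ≤ η / 2) (htop : 2 * K * A ^ (-β) ≤ η)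
    (hsmall : 2 * m * Module.finrank ℝ E / R ^ 2 + 2 * Λ * m / R + 2 * (l * M) <
      η * Real.exp (-((Λ + 1) * A))) :
    u (b + l • (ν b + d)) t - u (b + l • ν b) t ≤ 2 * η * l ^ (1 - β) := by
  have hβ0 := h.exponent_pos
  have hβ1 : 0 < 1 - β := sub_pos.2 h.exponent_lt_one
  have hK := h.const_pos
  have hlpos := hl.1
  have ht' : t ∈ Ioc 0 T := ⟨by linarith [h.time_pos, ht.1], ht.2⟩
  have hheight (y : E) (hy : y ∈ flatBox (ν b) a A (R + 1)) : 0 < ⟪ν b, y⟫ := ha.trans_le hy.1.1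
  have hgrad (y : E) (hy : y ∈ flatBox (ν b) a A (R + 1)) :=
    h.norm_rescaled_gradient_le (hbox y hy).1.1 ht' hlpos (hheight y hy) (hbox y hy).2
  have hval (y : E) (hy : y ∈ flatBox (ν b) a A (R + 1)) :=
    h.abs_rescaled_le (hbox y hy).1.1 (hbox y hy).1.2 ht' hlpos (hheight y hy) (hbox y hy).2
  have hv := sub_le_of_flatBox (σ := l * M) (v := fun y => l ^ (β - 1) * u (b + l • y) t)
    (g := fun y => (l ^ (β - 1) * l) • G (b + l • y) t)
    (B := fun y => (l ^ (β - 1) * l ^ 2) • H (b + l • y) t)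
    (f := fun y => l ^ (β - 1) * l ^ 2 * u' (b + l • y) t)
    (h.collar.norm_normal b hb) hd hd1 ha.le ha1 hA1 hR hη
    ((by positivity : 0 ≤ 2 * (2 * (K / (1 - β)) * A ^ (1 - β))).trans (by linarith)) hΛ
    (fun y hy =>
      (h.solution.hasParabolicDerivAt (_, t) ⟨(hbox y hy).1.1, ht'⟩).hessian.rescale _)
    (fun y hy => ?_) (fun y hy => ?_)
    (fun y hy => mem_closedBall_zero_iff.2 ((hgrad y hy).trans ?_))
    (fun y hy => (hval y hy).trans (le_trans ?_ hm)) (fun y hy hya => ?_)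
    (fun y hy hyA => ?_) hsmall
  · rw [← mul_sub] at hv
    calc u (b + l • (ν b + d)) t - u (b + l • ν b) t
        = l ^ (β - 1) * (u (b + l • (ν b + d)) t - u (b + l • ν b) t) * l ^ (1 - β) := by
          rw [mul_right_comm, ← Real.rpow_add hlpos, sub_add_sub_cancel, sub_self, Real.rpow_zero,
            one_mul]
      _ ≤ 2 * η * l ^ (1 - β) := by gcongr
  · rw [ContinuousLinearMap.toLinearMap_smul, map_smul, smul_eq_mul, ← mul_sub, norm_smul,
      Real.norm_of_nonneg (by positivity), Real.mul_rpow (by positivity) (norm_nonneg _),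
      h.rpow_sub_one_mul_self_rpow hlpos,
      h.solution.equation (_, t) ⟨(hbox y hy).1.1, ht'⟩]
  · rw [abs_mul, abs_of_pos (by positivity)]
    exact mul_le_mul (h.rpow_sub_one_mul_sq_le hl) (h.abs_time_deriv_le _ (hbox y hy).1.1 t ht)
      (abs_nonneg _) hlpos.le
  · exact mul_le_mul_of_nonneg_left
      (Real.rpow_le_rpow_of_nonpos ha hy.1.1 (neg_nonpos.2 hβ0.le)) (by positivity)
  · gcongr
    exacts [(hheight y hy).le, hy.1.2]
  · simpa only [hya] using (hval y hy).trans (by rw [hya]; exact hbot)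
  · simpa only [hyA] using (hgrad y hy).trans (by rw [hyA]; exact htop)

lemma eventually_sub_le {η : ℝ} (hη : 0 < η) :
    ∀ᶠ x in nearBoundary Ω, ∀ t ∈ Icc (T / 2) T, ∀ d : E, ⟪ν x, d⟫ = 0 → ‖d‖ ≤ 1 →
      u (x + boundaryDist Ω x • d) t - u x t ≤ 2 * η * boundaryDist Ω x ^ (1 - β) := by
  have hβ1 : 0 < 1 - β := sub_pos.2 h.exponent_lt_one
  have hK := h.const_pos
  obtain ⟨a, ⟨ha, ha1⟩, haη⟩ := exists_rpow_le (κ := η / (4 * (K / (1 - β)))) hβ1 (by positivity)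
  obtain ⟨A, hA1, hAη⟩ : ∃ A ≥ 1, 2 * K * A ^ (-β) ≤ η := by
    obtain ⟨c, hc, hcη⟩ := exists_rpow_le (κ := η / (2 * K)) h.exponent_pos (by positivity)
    refine ⟨c⁻¹, (one_le_inv₀ hc.1).2 hc.2, ?_⟩
    rw [Real.rpow_neg_eq_inv_rpow, inv_inv]
    exact (le_div_iff₀' (by positivity)).1 hcη
  set m := 4 * (K / (1 - β)) * A ^ (1 - β) with hm
  set Λ := (p * (2 * K * a ^ (-β)) ^ (p - 1)).toNNReal
  set q := η * Real.exp (-((Λ + 1) * A))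
  have hq : 0 < q := by positivity
  obtain ⟨R, hR, hRq⟩ := exists_div_sq_add_div_lt (2 * m * Module.finrank ℝ E) (2 * Λ * m)
    (half_pos hq)
  filter_upwards [eventually_mem_nearBoundary,
    h.collar.eventually_lt_nearBoundary h.collar.width_pos,
    h.collar.eventually_lt_nearBoundary one_pos,
    h.collar.eventually_lt_nearBoundary (by positivity : 0 < q / (4 * (|M| + 1))),
    h.collar.tendsto_boundaryDist_nearBoundary.eventually
      (h.collar.eventually_abs_boundaryDist_sub_le ha ha1 hA1 (by linarith : 0 ≤ R + 1))]
    with x hx hxδ hx1 hxM hbox t ht d hd hd1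
  obtain ⟨b, hb, hdist, -⟩ := h.collar.exists_foot x hx hxδ
  obtain ⟨hν, hxb⟩ := h.collar.normal_eq_of_dist_eq hx hxδ hb hdist
  set l := boundaryDist Ω x
  rw [hν] at hxb hd
  have hl : 0 < l := h.collar.boundaryDist_pos hx
  have hlM : 2 * (l * M) ≤ q / 2 := by
    rw [lt_div_iff₀ (by positivity)] at hxM
    nlinarith [le_abs_self M]
  rw [show x + l • d = b + l • (ν b + d) by rw [hxb]; module, show u x t = u (b + l • ν b) t by
    rw [← hxb]]
  refine h.sub_le_of_blowup (m := m) hb hd hd1 ha ha1 hA1 hR hη.le ⟨hl, hx1.le⟩ ht (hbox b hb)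
    (lipschitzOnWith_norm_rpow E (by linarith [h.two_lt]) _) (by linarith) ?_ hAη (by linarith)
  rw [le_div_iff₀ (by positivity)] at haη
  linarith

lemma eventually_inner_gradient_le {ε : ℝ} (hε : 0 < ε) :
    ∀ᶠ x in nearBoundary Ω, ∀ t ∈ Icc (T / 2) T, ∀ τ : E, ‖τ‖ ≤ 1 → ⟪ν x, τ⟫ = 0 →
      ⟪G x t, τ⟫ ≤ ε * boundaryDist Ω x ^ (-β) := by
  obtain ⟨C, hC, hhess⟩ := h.exists_norm_hessian_apply_le_rpow
  obtain ⟨s, hs, hs2, hsC⟩ : ∃ s > 0, s ≤ 1 / 2 ∧ C * s ≤ ε / 2 :=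
    ⟨min (1 / 2) (ε / 2 / C), by positivity, min_le_left _ _,
      (le_div_iff₀' hC).1 (min_le_right _ _)⟩
  filter_upwards [eventually_mem_nearBoundary, hhess,
    h.eventually_sub_le (by positivity : 0 < ε * s / 4)] with x hx hhess hincr t ht τ hτ hντ
  set l := boundaryDist Ω x
  have hl : 0 < l := h.collar.boundaryDist_pos hx
  have ht' : t ∈ Ioc 0 T := ⟨by linarith [h.time_pos, ht.1], ht.2⟩
  have hpow : l ^ (1 - β) = l ^ (-β) * l := by
    rw [← Real.rpow_add_one hl.ne', neg_add_eq_sub]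
  have hd : ‖(l * s) • τ‖ ≤ l * s := by
    rw [norm_smul, Real.norm_of_nonneg (by positivity)]
    exact mul_le_of_le_one_right (by positivity) hτ
  have hseg (a : ℝ) (ha : a ∈ Icc (0 : ℝ) 1) : x + a • (l * s) • τ ∈ closedBall x (l / 2) := by
    rw [mem_closedBall, dist_self_add_left, norm_smul, Real.norm_of_nonneg ha.1]
    nlinarith [ha.1, ha.2, norm_nonneg ((l * s) • τ)]
  have htaylor : ⟪G x t, (l * s) • τ⟫ ≤ u (x + (l * s) • τ) t - u x t +
      C * (l ^ (-β) / l) * (l * s) * ‖(l * s) • τ‖ :=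
    inner_gradient_le_of_norm_hessian_apply_le (f := (u · t)) (g := (G · t)) (A := (H · t))
      (fun a ha => (h.solution.hasParabolicDerivAt (_, t)
        ⟨h.collar.mem_of_mem_closedBall_half hx (hseg a ha), ht'⟩).hessian)
      fun a ha => (hhess _ (hseg a ha) t ht _).trans (by gcongr)
  have hincr' : u (x + (l * s) • τ) t - u x t ≤ 2 * (ε * s / 4) * l ^ (1 - β) := by
    rw [mul_smul]
    exact hincr t ht (s • τ) (by rw [inner_smul_right, hντ, mul_zero]) (by
      rw [norm_smul, Real.norm_of_nonneg hs.le]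
      nlinarith [norm_nonneg τ])
  have hscaled : (l * s) * ⟪G x t, τ⟫ ≤ (l * s) * (ε * l ^ (-β)) :=
    calc (l * s) * ⟪G x t, τ⟫ = ⟪G x t, (l * s) • τ⟫ := (inner_smul_right _ _ _).symm
      _ ≤ 2 * (ε * s / 4) * (l ^ (-β) * l) + C * (l ^ (-β) / l) * (l * s) * (l * s) := by
          rw [← hpow]
          exact htaylor.trans (add_le_add hincr' (by gcongr))
      _ = l ^ (-β) * l * s * (ε / 2 + C * s) := by
          field_simp
          ring
      _ ≤ l ^ (-β) * l * s * (ε / 2 + ε / 2) := by gcongr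
      _ = (l * s) * (ε * l ^ (-β)) := by ring
  exact le_of_mul_le_mul_left hscaled (by positivity)

lemma eventually_abs_inner_gradient_le {ε : ℝ} (hε : 0 < ε) :
    ∀ᶠ x in nearBoundary Ω, ∀ t ∈ Icc (T / 2) T, ∀ τ : E, ‖τ‖ ≤ 1 → ⟪ν x, τ⟫ = 0 →
      |⟪G x t, τ⟫| ≤ ε * boundaryDist Ω x ^ (-β) := by
  filter_upwards [h.eventually_inner_gradient_le hε] with x hx t ht τ hτ hντ
  refine abs_le'.2 ⟨hx t ht τ hτ hντ, ?_⟩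
  simpa only [inner_neg_right] using
    hx t ht (-τ) (by rwa [norm_neg]) (by rw [inner_neg_right, hντ, neg_zero])


lemma eventually_abs_inner_gradient_le_of_mem_closedBall {ε : ℝ} (hε : 0 < ε) :
    ∀ᶠ x in nearBoundary Ω, ∀ y ∈ closedBall x (boundaryDist Ω x / 2), ∀ t ∈ Icc (T / 2) T,
      ∀ τ : E, ‖τ‖ ≤ 1 → ⟪ν x, τ⟫ = 0 → |⟪G y t, τ⟫| ≤ ε * boundaryDist Ω x ^ (-β) := by
  have hK := h.const_pos
  filter_upwards [eventually_mem_nearBoundary,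
    h.collar.eventually_forall_closedBall_half (h.collar.eventually_lt_nearBoundary
      h.collar.width_pos),
    h.collar.eventually_forall_closedBall_half
      (h.eventually_abs_inner_gradient_le (by positivity : 0 < ε / 4)),
    h.collar.eventually_norm_normal_sub_lt (by positivity : 0 < ε / (4 * K))]
    with x hx hwidth htang hnormal y hy t ht τ hτ hντ
  set l := boundaryDist Ω x
  have hl : 0 < l := h.collar.boundaryDist_pos hx
  have hy' := h.collar.mem_of_mem_closedBall_half hx hy
  have hνy : ‖ν y‖ = 1 := h.collar.norm_normal_of_mem hy' (hwidth y hy)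
  set α := ⟪ν y, τ⟫ with hα
  have hα_le : |α| ≤ ε / (4 * K) := by
    rw [hα, ← sub_zero ⟪ν y, τ⟫, ← hντ, ← inner_sub_left]
    exact (abs_real_inner_le_norm _ _).trans
      ((mul_le_of_le_one_right (norm_nonneg _) hτ).trans (hnormal y hy).le)
  have horth : ⟪ν y, τ - α • ν y⟫ = 0 := by
    rw [inner_sub_right, inner_smul_right, real_inner_self_eq_norm_sq, hνy, ← hα]
    ring
  have hproj : ‖τ - α • ν y‖ ≤ 1 := by
    nlinarith [norm_sub_inner_smul_sq hνy τ, norm_nonneg τ, norm_nonneg (τ - α • ν y), sq_nonneg α]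
  have hnorm_grad : |⟪G y t, ν y⟫| ≤ 2 * K * l ^ (-β) := by
    refine (abs_real_inner_le_norm _ _).trans ?_
    rw [hνy, mul_one]
    exact h.norm_gradient_le_two_mul hy' ⟨by linarith [h.time_pos, ht.1], ht.2⟩ hl
      (half_boundaryDist_le hy)
  calc |⟪G y t, τ⟫| = |⟪G y t, τ - α • ν y⟫ + α * ⟪G y t, ν y⟫| := by
        rw [← inner_smul_right, ← inner_add_right, sub_add_cancel]
    _ ≤ |⟪G y t, τ - α • ν y⟫| + |α| * |⟪G y t, ν y⟫| := by
        rw [← abs_mul]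
        exact abs_add_le _ _
    _ ≤ ε / 4 * (2 * l ^ (-β)) + ε / (4 * K) * (2 * K * l ^ (-β)) := by
        gcongr
        exact (htang y hy t ht _ hproj horth).trans (by
          gcongr
          exact rpow_neg_le_two_mul_rpow_neg h.exponent_pos.le h.exponent_lt_one.le hl
            (half_boundaryDist_le hy))
    _ = ε * l ^ (-β) := by
        field_simp
        ring

lemma eventually_const_le_rpow {ε : ℝ} (hε : 0 < ε) (c : ℝ) :
    ∀ᶠ x in nearBoundary Ω, c ≤ ε * boundaryDist Ω x ^ (-β) :=
  h.collar.tendsto_boundaryDist_nearBoundary.eventually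
    (((tendsto_rpow_neg_nhdsGT_zero (neg_neg_iff_pos.2 h.exponent_pos)).const_mul_atTop
      hε).eventually_ge_atTop c)

lemma eventually_norm_hessian_apply_le {ε : ℝ} (hε : 0 < ε) :
    ∀ᶠ x in nearBoundary Ω, ∀ t ∈ Icc (T / 2) T, ∀ τ : E, ‖τ‖ ≤ 1 → ⟪ν x, τ⟫ = 0 →
      ‖H x t τ‖ ≤ ε * boundaryDist Ω x ^ (-(β * p)) := by
  obtain ⟨C, hC, hhess⟩ := h.exists_norm_hessian_apply_le
  have hε' : 0 < ε / C := div_pos hε hC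
  filter_upwards [eventually_mem_nearBoundary, hhess, h.eventually_const_le_rpow hε' Γ,
    h.eventually_abs_inner_gradient_le_of_mem_closedBall hε'] with x hx hhess hΓ hlate t ht τ hτ hντ
  have htang : ∀ y ∈ closedBall x (boundaryDist Ω x / 2), ∀ s ∈ Icc (T / 4) T,
      |⟪G y s, τ⟫| ≤ ε / C * boundaryDist Ω x ^ (-β) := fun y hy s hs => by
    rcases le_total s (T / 2) with hs' | hs'
    · have hearly := h.norm_gradient_le_early y (h.collar.mem_of_mem_closedBall_half hx hy) s
        ⟨hs.1, hs'⟩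
      exact (abs_real_inner_le_norm _ _).trans
        ((mul_le_of_le_one_right (norm_nonneg _) hτ).trans (hearly.trans hΓ))
    · exact hlate y hy s ⟨hs', hs.2⟩ τ hτ hντ
  calc ‖H x t τ‖ ≤ C * (ε / C * boundaryDist Ω x ^ (-β) / boundaryDist Ω x) :=
        hhess t ht τ _ htang
    _ = ε * boundaryDist Ω x ^ (-(β * p)) := by
        rw [h.rpow_neg_exponent_mul (h.collar.boundaryDist_pos hx)]
        field_simp

lemma eventually_tangential_sum_le {ε : ℝ} (hε : 0 < ε) :
    ∀ᶠ x in nearBoundary Ω, ∀ t ∈ Icc (T / 2) T, ∀ τ τ' : E, ‖τ‖ = 1 → ‖τ'‖ = 1 →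
      ⟪τ, ν x⟫ = 0 → ⟪τ', ν x⟫ = 0 →
      |⟪G x t, τ⟫| ^ p + |⟪H x t (ν x), τ⟫| + |⟪H x t τ', τ⟫| ≤
        ε * boundaryDist Ω x ^ (-(β * p)) := by
  have hp : 0 < p := by linarith [h.two_lt]
  obtain ⟨ε', ⟨hε', -⟩, hεp⟩ := exists_rpow_le hp (by positivity : 0 < ε / 3)
  filter_upwards [eventually_mem_nearBoundary,
    h.collar.eventually_lt_nearBoundary h.collar.width_pos,
    h.eventually_abs_inner_gradient_le hε',
    h.eventually_norm_hessian_apply_le (by positivity : 0 < ε / 3)]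
    with x hx hwidth hgrad hhess t ht τ τ' hτ hτ' hτν hτν'
  set l := boundaryDist Ω x
  have hl : 0 < l := h.collar.boundaryDist_pos hx
  have ht' : t ∈ Ioc 0 T := ⟨by linarith [h.time_pos, ht.1], ht.2⟩
  rw [real_inner_comm] at hτν hτν'
  have hgradient : |⟪G x t, τ⟫| ^ p ≤ ε / 3 * l ^ (-(β * p)) :=
    calc |⟪G x t, τ⟫| ^ p ≤ (ε' * l ^ (-β)) ^ p :=
          Real.rpow_le_rpow (abs_nonneg _) (hgrad t ht τ hτ.le hτν) hp.le
      _ = ε' ^ p * l ^ (-(β * p)) := by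
          rw [Real.mul_rpow hε'.le (by positivity), ← Real.rpow_mul hl.le, neg_mul]
      _ ≤ ε / 3 * l ^ (-(β * p)) := by gcongr
  have hmixed : |⟪H x t (ν x), τ⟫| ≤ ε / 3 * l ^ (-(β * p)) := by
    rw [(h.solution.hasParabolicDerivAt (x, t) ⟨hx, ht'⟩).hessian.inner_apply_comm]
    refine (abs_real_inner_le_norm _ _).trans ?_
    rw [h.collar.norm_normal_of_mem hx hwidth, mul_one]
    exact hhess t ht τ hτ.le hτν
  have htangential : |⟪H x t τ', τ⟫| ≤ ε / 3 * l ^ (-(β * p)) := by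
    refine (abs_real_inner_le_norm _ _).trans ?_
    rw [hτ, mul_one]
    exact hhess t ht τ' hτ'.le hτν'
  linarith

lemma exists_norm_gradient_hessian_le {l : ℝ} (hl : 0 < l) :
    ∃ B : ℝ, ∀ x ∈ Ω, l ≤ boundaryDist Ω x → ∀ t ∈ Icc (T / 2) T,
      ‖G x t‖ ≤ B ∧ ‖H x t‖ ≤ B := by
  have hT := h.time_pos
  have hcompact : IsCompact ((closure Ω ∩ {x | l ≤ boundaryDist Ω x}) ×ˢ Icc (T / 2) T) :=
    (h.collar.isBounded.isCompact_closure.inter_right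
      (isClosed_le continuous_const continuous_boundaryDist)).prod isCompact_Icc
  have hsub : (closure Ω ∩ {x | l ≤ boundaryDist Ω x}) ×ˢ Icc (T / 2) T ⊆ Ω ×ˢ Ioc 0 T :=
    prod_mono (fun x hx => h.collar.mem_of_mem_closure hx.1 (hl.trans_le hx.2))
      fun s hs => ⟨by linarith [hs.1], hs.2⟩
  obtain ⟨B, hB⟩ := hcompact.exists_bound_of_continuousOn
    ((h.solution.continuousOn_gradient.prodMk h.solution.continuousOn_hessian).mono hsub)
  exact ⟨B, fun x hx hxl t ht => norm_prod_le_iff.1 (hB (x, t) ⟨⟨subset_closure hx, hxl⟩, ht⟩)⟩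

lemma exists_tangential_sum_le {ε : ℝ} (hε : 0 < ε) :
    ∃ C > 0, ∀ x ∈ {x ∈ Ω | boundaryDist Ω x < δ₀}, ∀ t ∈ Icc (T / 2) T, ∀ τ τ' : E,
      ‖τ‖ = 1 → ‖τ'‖ = 1 → ⟪τ, ν x⟫ = 0 → ⟪τ', ν x⟫ = 0 →
      |⟪G x t, τ⟫| ^ p + |⟪H x t (ν x), τ⟫| + |⟪H x t τ', τ⟫| ≤
        ε * boundaryDist Ω x ^ (-(β * p)) + C := by
  have hp : 0 < p := by linarith [h.two_lt]
  obtain ⟨l, hl, hnear⟩ := eventually_nearBoundary_iff.1 (h.eventually_tangential_sum_le hε)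
  obtain ⟨B, hB⟩ := h.exists_norm_gradient_hessian_le hl
  refine ⟨|B| ^ p + |B| + |B| + 1, by positivity, ?_⟩
  rintro x ⟨hx, hwidth⟩ t ht τ τ' hτ hτ' hτν hτν'
  have hd := h.collar.boundaryDist_pos hx
  rcases lt_or_ge (boundaryDist Ω x) l with hxl | hxl
  · exact (hnear x hx hxl t ht τ τ' hτ hτ' hτν hτν').trans
      (le_add_of_nonneg_right (by positivity))
  have hgrad : |⟪G x t, τ⟫| ≤ |B| := by
    refine (abs_real_inner_le_norm _ _).trans ?_
    rw [hτ, mul_one]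
    exact (hB x hx hxl t ht).1.trans (le_abs_self B)
  have hhess (v : E) (hv : ‖v‖ = 1) : |⟪H x t v, τ⟫| ≤ |B| := by
    refine (abs_real_inner_le_norm _ _).trans ?_
    rw [hτ, mul_one]
    refine ((H x t).le_opNorm v).trans ?_
    rw [hv, mul_one]
    exact (hB x hx hxl t ht).2.trans (le_abs_self B)
  calc |⟪G x t, τ⟫| ^ p + |⟪H x t (ν x), τ⟫| + |⟪H x t τ', τ⟫| ≤ |B| ^ p + |B| + |B| := by
        exact add_le_add (add_le_add (Real.rpow_le_rpow (abs_nonneg _) hgrad hp.le)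
          (hhess _ (h.collar.norm_normal_of_mem hx hwidth))) (hhess _ hτ')
    _ ≤ ε * boundaryDist Ω x ^ (-(β * p)) + (|B| ^ p + |B| + |B| + 1) := by
        have hnonneg : 0 ≤ ε * boundaryDist Ω x ^ (-(β * p)) := by positivity
        linarith

end IsBernsteinSolution

end BernsteinSolution

section Main

variable {E : Type*} [NormedAddCommGroup E] [InnerProductSpace ℝ E] [FiniteDimensional ℝ E]
  {Ω : Set E}

lemma exists_bernstein_const_le (hΩ : Bornology.IsBounded Ω) {β : ℝ} (hβ : 0 ≤ β)
    (hpos : ∀ x ∈ Ω, 0 < boundaryDist Ω x) (C₀ : ℝ) :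
    ∃ K > 0, ∀ x ∈ Ω, C₀ * (boundaryDist Ω x ^ (-β) + 1) ≤ K * boundaryDist Ω x ^ (-β) := by
  obtain ⟨D, hD⟩ := hΩ.isCompact_closure.exists_bound_of_continuousOn
    (continuous_boundaryDist (Ω := Ω)).continuousOn
  refine ⟨|C₀| * (1 + |D| ^ β) + 1, by positivity, fun x hx => ?_⟩
  have hd := hpos x hx
  set d := boundaryDist Ω x
  have hdD : d ≤ |D| := (le_abs_self d).trans ((hD x (subset_closure hx)).trans (le_abs_self D))
  have hone : 1 ≤ |D| ^ β * d ^ (-β) := by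
    rw [Real.rpow_neg hd.le, ← div_eq_mul_inv, one_le_div (by positivity)]
    exact Real.rpow_le_rpow hd.le hdD hβ
  calc C₀ * (d ^ (-β) + 1) ≤ |C₀| * (d ^ (-β) + |D| ^ β * d ^ (-β)) :=
        mul_le_mul (le_abs_self C₀) (by gcongr) (by positivity) (abs_nonneg C₀)
    _ ≤ |C₀| * (d ^ (-β) + |D| ^ β * d ^ (-β)) + d ^ (-β) :=
        le_add_of_nonneg_right (by positivity)
    _ = (|C₀| * (1 + |D| ^ β) + 1) * d ^ (-β) := by ring

lemma forall_mem_Ioc_norm_le {V : Type*} [SeminormedAddCommGroup V] {T B : ℝ} {f : ℝ → V}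
    (hf : ContinuousOn f (Ioc 0 T)) (hB : ∀ t ∈ Ioo 0 T, ‖f t‖ ≤ B) : ∀ t ∈ Ioc 0 T, ‖f t‖ ≤ B := by
  intro t ht
  rcases eq_or_lt_of_le ht.2 with rfl | htT
  · have := right_nhdsWithin_Ioo_neBot ht.1
    exact le_of_tendsto ((hf t ht).mono Ioo_subset_Ioc_self).norm
      (eventually_mem_nhdsWithin.mono hB)
  · exact hB t ⟨ht.1, htT⟩

lemma isNormalCollar_of_nearestPoint (hΩo : IsOpen Ω) (hΩb : Bornology.IsBounded Ω)
    {δ₀ : ℝ} (hδ₀ : 0 < δ₀) {P ν : E → E}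
    (hP : ∀ x ∈ {x ∈ Ω | boundaryDist Ω x < δ₀},
      P x ∈ frontier Ω ∧ dist x (P x) = boundaryDist Ω x)
    (hν : ∀ b ∈ frontier Ω, ‖ν b‖ = 1 ∧
      ∀ s ∈ Ioo 0 δ₀, b + s • ν b ∈ Ω ∧ boundaryDist Ω (b + s • ν b) = s)
    (hνP : ∀ x ∈ {x ∈ Ω | boundaryDist Ω x < δ₀},
      ν x = ν (P x) ∧ HasGradientAt (boundaryDist Ω) (ν x) x) :
    IsNormalCollar Ω δ₀ ν where
  isOpen := hΩo
  isBounded := hΩb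
  width_pos := hδ₀
  norm_normal b hb := (hν b hb).1
  inward b hb := (hν b hb).2
  exists_foot x hx hxδ :=
    ⟨P x, (hP x ⟨hx, hxδ⟩).1, (hP x ⟨hx, hxδ⟩).2, (hνP x ⟨hx, hxδ⟩).1⟩
  hasGradientAt x hx hxδ := (hνP x ⟨hx, hxδ⟩).2

lemma isHamiltonJacobiOn_of_sum_inner {ι : Type*} [Fintype ι] (e : OrthonormalBasis ι ℝ E)
    (hΩ : IsOpen Ω) {I : Set ℝ} {F : E → ℝ} {u : E → ℝ → ℝ} {G : E → ℝ → E}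
    {H : E → ℝ → E →L[ℝ] E} {u' : E → ℝ → ℝ}
    (hG : ∀ t ∈ I, ∀ x ∈ Ω, HasGradientAt (u · t) (G x t) x)
    (hH : ∀ t ∈ I, ∀ x ∈ Ω, HasFDerivAt (G · t) (H x t) x)
    (hu' : ∀ t ∈ I, ∀ x ∈ Ω, HasDerivAt (u x) (u' x t) t)
    (heq : ∀ t ∈ I, ∀ x ∈ Ω, u' x t - ∑ i, ⟪H x t (e i), e i⟫ = F (G x t))
    (hu_cont : ContinuousOn (fun q : E × ℝ => u q.1 q.2) (Ω ×ˢ I))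
    (hG_cont : ContinuousOn (fun q : E × ℝ => G q.1 q.2) (Ω ×ˢ I))
    (hH_cont : ContinuousOn (fun q : E × ℝ => H q.1 q.2) (Ω ×ˢ I)) :
    IsHamiltonJacobiOn F u G H u' (Ω ×ˢ I) where
  hasParabolicDerivAt q hq :=
    ⟨⟨mem_of_superset (hΩ.mem_nhds hq.1) (hG q.2 hq.2), hH q.2 hq.2 q.1 hq.1⟩,
      hu' q.2 hq.2 q.1 hq.1⟩
  equation q hq := by
    rw [LinearMap.trace_eq_sum_inner _ e, ← heq q.2 hq.2 q.1 hq.1]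
    simp only [ContinuousLinearMap.coe_coe, real_inner_comm]
  continuousOn := hu_cont
  continuousOn_gradient := hG_cont
  continuousOn_hessian := hH_cont

theorem stmt4_general {p β δ₀ T : ℝ} (hp : 2 < p) (hβ : β = 1 / (p - 1)) (hT : 0 < T) {ν : E → E}
    (hcollar : IsNormalCollar Ω δ₀ ν) {u : E → ℝ → ℝ} {G : E → ℝ → E} {H : E → ℝ → E →L[ℝ] E}
    {u' : E → ℝ → ℝ} (hsol : IsHamiltonJacobiOn (fun v => ‖v‖ ^ p) u G H u' (Ω ×ˢ Ioc 0 T))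
    (hu_cont : ContinuousOn (fun q : E × ℝ => u q.1 q.2) (closure Ω ×ˢ Icc 0 T))
    (hu_bd : ∀ b ∈ frontier Ω, ∀ t ∈ Icc 0 T, u b t = 0)
    (hG_cont : ContinuousOn (fun q : E × ℝ => G q.1 q.2) (closure Ω ×ˢ Ico 0 T))
    {M : ℝ} (hM : ∀ x ∈ Ω, ∀ t ∈ Icc (T / 2) T, |u' x t| ≤ M)
    {C₀ : ℝ} (hC₀ : ∀ x ∈ Ω, ∀ t ∈ Ico 0 T, ‖G x t‖ ≤ C₀ * (boundaryDist Ω x ^ (-β) + 1))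
    {ε : ℝ} (hε : 0 < ε) :
    ∃ C > 0, ∀ x ∈ {x ∈ Ω | boundaryDist Ω x < δ₀}, ∀ t ∈ Icc (T / 2) T, ∀ τ τ' : E,
      ‖τ‖ = 1 → ‖τ'‖ = 1 → ⟪τ, ν x⟫ = 0 → ⟪τ', ν x⟫ = 0 →
      |⟪G x t, τ⟫| ^ p + |⟪H x t (ν x), τ⟫| + |⟪H x t τ', τ⟫| ≤
        ε * boundaryDist Ω x ^ (-(β * p)) + C := by
  have hβ₀ : 0 ≤ β := by
    rw [hβ]
    exact one_div_nonneg.2 (by linarith)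
  obtain ⟨K, hK, hKC⟩ := exists_bernstein_const_le hcollar.isBounded hβ₀
    (fun _ => hcollar.boundaryDist_pos) C₀
  have hbernstein : ∀ x ∈ Ω, ∀ t ∈ Ioc 0 T, ‖G x t‖ ≤ K * boundaryDist Ω x ^ (-β) := fun x hx =>
    forall_mem_Ioc_norm_le
      (hsol.continuousOn_gradient.comp (f := (x, ·)) (by fun_prop) fun t ht => ⟨hx, ht⟩)
      fun t ht => (hC₀ x hx t (Ioo_subset_Ico_self ht)).trans (hKC x hx)
  obtain ⟨Γ, hΓ⟩ := (hcollar.isBounded.isCompact_closure.prod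
    (isCompact_Icc (a := T / 4) (b := T / 2))).exists_bound_of_continuousOn
    (hG_cont.mono (prod_mono_right fun s hs => ⟨by linarith [hs.1], by linarith [hs.2]⟩))
  have h : IsBernsteinSolution p β δ₀ T K Γ M Ω ν u G H u' :=
    ⟨hcollar, hp, hβ, hT, hsol,
      fun t ht => hu_cont.comp (f := (·, t)) (by fun_prop)
        fun x hx => ⟨hx, Ioc_subset_Icc_self ht⟩,
      fun b hb t ht => hu_bd b hb t (Ioc_subset_Icc_self ht), hK, hbernstein,
      fun x hx t ht => hΓ (x, t) ⟨subset_closure hx, ht⟩, hM⟩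
  exact h.exists_tangential_sum_le hε

end Main

theorem stmt4 {n : ℕ} (hn : 1 ≤ n)
    -- the exponents and constants
    (p β cp dp : ℝ) (hp : 2 < p) (hβ : β = 1 / (p - 1))
    (hcp : cp = β ^ β / (1 - β)) (hdp : dp = β ^ β)
    -- the bounded domain Ω with C² boundary
    (Ω : Set (EuclideanSpace ℝ (Fin n))) (hΩo : IsOpen Ω) (hΩb : Bornology.IsBounded Ω) (hΩc2 : IsC2Boundary Ω)
    -- the distance to the boundary
    (δ : EuclideanSpace ℝ (Fin n) → ℝ) (hδ : ∀ x, δ x = infDist x (frontier Ω))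
    -- δ₀ and the boundary neighborhood Ωδ = {x ∈ Ω : δ(x) < δ₀}
    (δ₀ : ℝ) (hδ₀ : 0 < δ₀)
    (Ωδ : Set (EuclideanSpace ℝ (Fin n))) (hΩδ : Ωδ = {x ∈ Ω | δ x < δ₀})
    -- δ is C² on Ωδ
    (hδC2 : ContDiffOn ℝ 2 δ Ωδ)
    -- every x ∈ Ωδ has a unique nearest boundary point P x
    (P : EuclideanSpace ℝ (Fin n) → EuclideanSpace ℝ (Fin n))
    (hP : ∀ x ∈ Ωδ, P x ∈ frontier Ω ∧ dist x (P x) = δ x ∧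
      ∀ b ∈ frontier Ω, dist x b = δ x → b = P x)
    -- interior sphere condition of radius δ₀ at every boundary point
    (hsph : ∀ b ∈ frontier Ω, ∃ y, ball y δ₀ ⊆ Ω ∧ dist y b = δ₀)
    -- the inward unit normal field ν
    (ν : EuclideanSpace ℝ (Fin n) → EuclideanSpace ℝ (Fin n))
    (hν1 : ∀ b ∈ frontier Ω, ‖ν b‖ = 1 ∧
      ∀ s ∈ Ioo (0 : ℝ) δ₀, b + s • ν b ∈ Ω ∧ δ (b + s • ν b) = s)
    (hν2 : ∀ x ∈ Ωδ, ν x = ν (P x) ∧ HasGradientAt δ (ν x) x)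
    -- the solution u on [0,T], with spatial gradient G, spatial Hessian H and
    -- time derivative u'
    (T : ℝ) (hT : 0 < T)
    (u : EuclideanSpace ℝ (Fin n) → ℝ → ℝ)
    (G : EuclideanSpace ℝ (Fin n) → ℝ → EuclideanSpace ℝ (Fin n))
    (H : EuclideanSpace ℝ (Fin n) → ℝ → (EuclideanSpace ℝ (Fin n) →L[ℝ] EuclideanSpace ℝ (Fin n)))
    (u' : EuclideanSpace ℝ (Fin n) → ℝ → ℝ)
    -- u is continuous on Ω̄ × [0,T] and vanishes on ∂Ω × [0,T]
    (hu_cont : ContinuousOn (fun q : EuclideanSpace ℝ (Fin n) × ℝ => u q.1 q.2) (closure Ω ×ˢ Icc 0 T))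
    (hu_bd : ∀ b ∈ frontier Ω, ∀ t ∈ Icc (0 : ℝ) T, u b t = 0)
    -- u is continuously differentiable in x on Ω̄ × [0,T), with spatial gradient G
    (hG : ∀ t ∈ Ico (0 : ℝ) T, ∀ x ∈ closure Ω,
      HasGradientWithinAt (fun y => u y t) (G x t) (closure Ω) x)
    (hG_cont : ContinuousOn (fun q : EuclideanSpace ℝ (Fin n) × ℝ => G q.1 q.2) (closure Ω ×ˢ Ico 0 T))
    -- on Ω × (0,T], u has spatial gradient G, spatial Hessian H and time derivative u',
    -- all continuous there
    (hG2 : ∀ t ∈ Ioc (0 : ℝ) T, ∀ x ∈ Ω, HasGradientAt (fun y => u y t) (G x t) x)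
    (hH : ∀ t ∈ Ioc (0 : ℝ) T, ∀ x ∈ Ω, HasFDerivAt (fun y => G y t) (H x t) x)
    (hu' : ∀ t ∈ Ioc (0 : ℝ) T, ∀ x ∈ Ω, HasDerivAt (fun s => u x s) (u' x t) t)
    (hreg : ContinuousOn (fun q : EuclideanSpace ℝ (Fin n) × ℝ =>
      (u q.1 q.2, G q.1 q.2, H q.1 q.2, u' q.1 q.2)) (Ω ×ˢ Ioc 0 T))
    -- the PDE uₜ - Δu = |∇u|^p on Ω × (0,T]
    (hPDE : ∀ t ∈ Ioc (0 : ℝ) T, ∀ x ∈ Ω,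
      u' x t - ∑ i : Fin n, ⟪H x t (EuclideanSpace.single i (1 : ℝ)),
        EuclideanSpace.single i (1 : ℝ)⟫ = ‖G x t‖ ^ p)
    -- a priori bounds: |uₜ| ≤ M on Ω × [T/2,T] and the Bernstein estimate
    (M : ℝ) (hM : ∀ x ∈ Ω, ∀ t ∈ Icc (T / 2) T, |u' x t| ≤ M)
    (C₀ : ℝ) (hC₀ : ∀ x ∈ Ω, ∀ t ∈ Ico (0 : ℝ) T, ‖G x t‖ ≤ C₀ * ((δ x) ^ (-β) + 1))
    :
    ∀ ε > 0, ∃ C > 0, ∀ x ∈ Ωδ, ∀ t ∈ Icc (T / 2) T,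
      ∀ τ τ' : EuclideanSpace ℝ (Fin n), ‖τ‖ = 1 → ‖τ'‖ = 1 → ⟪τ, ν x⟫ = 0 → ⟪τ', ν x⟫ = 0 →
        |⟪G x t, τ⟫| ^ p + |⟪H x t (ν x), τ⟫| + |⟪H x t τ', τ⟫| ≤
          ε * (δ x) ^ (-(β * p)) + C := by
  obtain rfl : δ = boundaryDist Ω := funext hδ
  subst hΩδ
  exact fun ε => stmt4_general hp hβ hT
    (isNormalCollar_of_nearestPoint hΩo hΩb hδ₀ (fun x hx => (hP x hx).imp_right And.left) hν1 hν2)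
    (isHamiltonJacobiOn_of_sum_inner (EuclideanSpace.basisFun (Fin n) ℝ) hΩo hG2 hH hu'
      (by simpa only [EuclideanSpace.basisFun_apply] using hPDE)
      hreg.fst hreg.snd.fst hreg.snd.snd.fst)
    hu_cont hu_bd hG_cont hM hC₀
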